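/- arXiv:1910.13384 — 3 statements merged into one kernel-verified Lean document; each statement's English description precedes it below -/
import Mathlib

section
/- Assume the sieve setup with sup_d |λ_d| ≤ (log X)^{k/2}. Then there is an absolute constant C such that ∑_{X ≤ n ≤ 2X} w_n² ≤ C·X·(log X)^{16 k²}. -/
/-- `⟨P3⟩`: positive integers all of whose prime factors are `≡ 3 (mod 4)` (contains 1). -/
def InP3 (n : ℕ) : Prop := ∀ p : ℕ, p.Prime → p ∣ n → p % 4 = 3

open Filter Topology

noncomputable def powHom (s : ℝ) (hs : s ≠ 0) : ℕ →*₀ ℝ where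
  toFun n := ((n : ℝ) ^ s)⁻¹
  map_zero' := by simp [Real.zero_rpow hs]
  map_one' := by simp
  map_mul' m n := by
    push_cast
    rw [Real.mul_rpow (by positivity) (by positivity), mul_inv]

noncomputable def chiHom (s : ℝ) (_hs : s ≠ 0) : ℕ →*₀ ℝ where
  toFun n := (ZMod.χ₄ (n : ZMod 4) : ℝ) * ((n : ℝ) ^ s)⁻¹
  map_zero' := by simp
  map_one' := by simp
  map_mul' m n := by
    push_cast
    rw [Real.mul_rpow (by positivity) (by positivity), mul_inv, map_mul]
    push_cast
    ring

lemma powHom_apply (s : ℝ) (hs : s ≠ 0) (n : ℕ) : powHom s hs n = ((n : ℝ) ^ s)⁻¹ := rfl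
lemma chiHom_apply (s : ℝ) (hs : s ≠ 0) (n : ℕ) :
    chiHom s hs n = (ZMod.χ₄ (n : ZMod 4) : ℝ) * ((n : ℝ) ^ s)⁻¹ := rfl

lemma chi_abs (n : ℕ) : |(ZMod.χ₄ (n : ZMod 4) : ℝ)| ≤ 1 := by
  rcases ZMod.isQuadratic_χ₄ (n : ZMod 4) with h | h | h <;> simp [h]

lemma powHom_summable (s : ℝ) (hs : 1 < s) : Summable (fun n => ‖powHom s (by linarith) n‖) := by
  simp_rw [powHom_apply]
  exact (Real.summable_nat_rpow_inv.2 hs).norm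

lemma chiHom_summable (s : ℝ) (hs : 1 < s) : Summable (fun n => ‖chiHom s (by linarith) n‖) := by
  refine Summable.of_nonneg_of_le (fun _ => norm_nonneg _) (fun n => ?_) (powHom_summable s hs)
  rw [chiHom_apply, powHom_apply, norm_mul]
  exact mul_le_of_le_one_left (norm_nonneg _) (chi_abs n)

lemma zeta_le (s : ℝ) (hs : 1 < s) : ∑' n, powHom s (by linarith) n ≤ 1 + 1 / (s - 1) := by
  have h := ZetaAsymptotics.zeta_limit_aux1 hs
  have h2 : 0 ≤ ZetaAsymptotics.termTSum s :=
    tsum_nonneg (fun n => ZetaAsymptotics.term_nonneg _ _)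
  have h3 : ∑' n, powHom s (by linarith) n = ∑' n : ℕ, 1 / (n + 1 : ℝ) ^ s := by
    rw [(powHom_summable s hs).of_norm.tsum_eq_zero_add]
    simp [powHom_apply, Real.zero_rpow (show s ≠ 0 by linarith)]
  rw [h3]
  have : 0 ≤ s * ZetaAsymptotics.termTSum s := by positivity
  linarith

lemma L_ge (s : ℝ) (hs : 1 < s) : 2 / 3 ≤ ∑' n, chiHom s (by linarith) n := by
  have ht := (chiHom_summable s hs).of_norm.hasSum.tendsto_sum_nat
  have ht2 : Tendsto (fun N : ℕ => 4 * (N + 1)) atTop atTop :=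
    tendsto_atTop_mono (fun n => by simp; omega) tendsto_id
  refine ge_of_tendsto' (ht.comp ht2) (fun N => ?_)
  simp only [Function.comp]
  have key : ∀ N : ℕ, ∑ i ∈ Finset.range (4 * (N + 1)), chiHom s (by linarith) i
      = ∑ i ∈ Finset.range (4 * N), chiHom s (by linarith) i + (((4 * N + 1 : ℝ) ^ s)⁻¹ - ((4 * N + 3 : ℝ) ^ s)⁻¹) := by
    intro N
    rw [show 4 * (N + 1) = 4 * N + 1 + 1 + 1 + 1 by ring]
    simp only [Finset.sum_range_succ]
    have e0 : ZMod.χ₄ ((4 * N : ℕ) : ZMod 4) = 0 := by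
      rw [ZMod.χ₄_nat_eq_if_mod_four]; simp; omega
    have e1 : ZMod.χ₄ ((4 * N + 1 : ℕ) : ZMod 4) = 1 := ZMod.χ₄_nat_one_mod_four (by omega)
    have e2 : ZMod.χ₄ ((4 * N + 1 + 1 : ℕ) : ZMod 4) = 0 := by
      rw [ZMod.χ₄_nat_eq_if_mod_four]; rw [if_pos (by omega)]
    have e3 : ZMod.χ₄ ((4 * N + 1 + 1 + 1 : ℕ) : ZMod 4) = -1 := ZMod.χ₄_nat_three_mod_four (by omega)
    rw [chiHom_apply, chiHom_apply, chiHom_apply, chiHom_apply, e0, e1, e2, e3]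
    push_cast
    ring
  induction N with
  | zero =>
    rw [key 0]
    simp
    have : (3:ℝ) ^ (1:ℝ) ≤ 3 ^ s := Real.rpow_le_rpow_of_exponent_le (by norm_num) hs.le
    rw [Real.rpow_one] at this
    have := inv_anti₀ (by norm_num) this
    linarith
  | succ n ih =>
    rw [key (n+1)]
    have : ((4 * ((n+1:ℕ):ℝ) + 3 : ℝ) ^ s)⁻¹ ≤ ((4 * ((n+1:ℕ):ℝ) + 1 : ℝ) ^ s)⁻¹ := by
      apply inv_anti₀ (by positivity)
      apply Real.rpow_le_rpow (by positivity) (by linarith) (by linarith)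
    linarith

lemma prod_bound (s : ℝ) (hs : 1 < s) (M : ℕ) :
    (∏ p ∈ (Nat.primesBelow M).filter (fun p => p % 4 = 3), (1 + ((p : ℝ) ^ s)⁻¹)) ^ 2
      ≤ 3 / 2 * (1 + 1 / (s - 1)) := by
  set c : ℕ → ℝ := fun p => if p % 4 = 3 then (1 + ((p : ℝ) ^ s)⁻¹) ^ 2 else 1 with hc
  have hc1 : ∀ p, 1 ≤ c p := by
    intro p
    simp only [hc]
    split_ifs
    · exact one_le_pow₀ (by linarith [show (0:ℝ) ≤ ((p : ℝ) ^ s)⁻¹ by positivity])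
    · exact le_rfl
  have e1 : (∏ p ∈ (Nat.primesBelow M).filter (fun p => p % 4 = 3), (1 + ((p : ℝ) ^ s)⁻¹)) ^ 2
      = ∏ p ∈ Nat.primesBelow M, c p := by
    rw [← Finset.prod_pow, Finset.prod_filter]
  rw [e1]
  set A := ∏ p ∈ Nat.primesBelow M, c p
  have hz := EulerProduct.eulerProduct_completely_multiplicative (powHom_summable s hs)
  have hL := EulerProduct.eulerProduct_completely_multiplicative (chiHom_summable s hs)
  have hfac : ∀ p : ℕ, p.Prime → 0 ≤ (1 - chiHom s (by linarith) p)⁻¹ ∧ 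
      c p * (1 - chiHom s (by linarith) p)⁻¹ ≤ (1 - powHom s (by linarith) p)⁻¹ := by
    intro p hp
    rw [chiHom_apply, powHom_apply]
    have hx0 : 0 < ((p : ℝ) ^ s)⁻¹ := by have := hp.pos; positivity
    have hx1 : ((p : ℝ) ^ s)⁻¹ < 1 := by
      apply inv_lt_one_of_one_lt₀
      exact Real.one_lt_rpow (by exact_mod_cast hp.one_lt) (by linarith)
    set x := ((p : ℝ) ^ s)⁻¹
    by_cases h3 : p % 4 = 3
    · have : c p = (1 + x)^2 := by simp [hc, h3, x]
      rw [this, ZMod.χ₄_nat_three_mod_four h3]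
      push_cast
      have : 0 < 1 - x := by linarith
      refine ⟨by rw [inv_nonneg]; linarith, ?_⟩
      rw [show 1 - -1 * x = 1 + x by ring, ← div_eq_mul_inv, div_le_iff₀ (by linarith), inv_mul_eq_div,
        le_div_iff₀ this]
      nlinarith [mul_pos hx0 hx0, mul_pos (mul_pos hx0 hx0) hx0]
    · have : c p = 1 := by simp [hc, h3]
      rw [this, one_mul]
      have h4 : (ZMod.χ₄ (p : ZMod 4) : ℝ) * x ≤ x :=
        mul_le_of_le_one_left hx0.le (abs_le.1 (chi_abs p)).2
      refine ⟨by rw [inv_nonneg]; linarith, ?_⟩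
      exact inv_anti₀ (by linarith) (by linarith)
  have hlim : A * ∑' n, chiHom s (by linarith) n ≤ ∑' n, powHom s (by linarith) n := by
    refine le_of_tendsto_of_tendsto (hL.const_mul A) hz ?_
    filter_upwards [eventually_ge_atTop M] with N hN
    have hA : A ≤ ∏ p ∈ Nat.primesBelow N, c p := by
      apply Finset.prod_le_prod_of_subset_of_one_le
      · intro p hp
        rw [Nat.mem_primesBelow] at hp ⊢
        exact ⟨by omega, hp.2⟩
      · intro p _
        linarith [hc1 p]
      · intro p _ _
        exact hc1 p
    calc _ ≤ (∏ p ∈ Nat.primesBelow N, c p) * ∏ p ∈ Nat.primesBelow N, (1 - chiHom s (by linarith) p)⁻¹ := by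
          apply mul_le_mul_of_nonneg_right hA
          exact Finset.prod_nonneg (fun p hp => (hfac p (Nat.prime_of_mem_primesBelow hp)).1)
      _ ≤ _ := by
          rw [← Finset.prod_mul_distrib]
          apply Finset.prod_le_prod
          · intro p hp
            exact mul_nonneg (by linarith [hc1 p]) (hfac p (Nat.prime_of_mem_primesBelow hp)).1
          · intro p hp
            exact (hfac p (Nat.prime_of_mem_primesBelow hp)).2
  have hA0 : 0 ≤ A := Finset.prod_nonneg (fun p _ => by linarith [hc1 p])
  nlinarith [L_ge s hs, zeta_le s hs]


lemma roots_mod_p {k : ℕ} (a b : Fin k → ℤ) (p : ℕ) (hp : p.Prime)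
    (h : ∃ n : ℤ, Int.gcd (∏ i, (a i * n + b i)) (p : ℤ) = 1) :
    ((Finset.range p).filter (fun r : ℕ => (p : ℤ) ∣ ∏ i, (a i * (r : ℤ) + b i))).card ≤ k := by
  have := Fact.mk hp
  classical
  obtain ⟨n, hn⟩ := h
  set f : Polynomial (ZMod p) := ∏ i, (Polynomial.C (a i : ZMod p) * Polynomial.X + Polynomial.C (b i : ZMod p)) with hf
  have hev : ∀ m : ℤ, f.eval (m : ZMod p) = ((∏ i, (a i * m + b i) : ℤ) : ZMod p) := by
    intro m
    simp [hf, Polynomial.eval_prod]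
  have hf0 : f ≠ 0 := by
    intro h0
    have := hev n
    rw [h0, Polynomial.eval_zero] at this
    have h1 := (ZMod.intCast_zmod_eq_zero_iff_dvd _ p).1 this.symm
    have h2 := Int.dvd_coe_gcd h1 (dvd_refl (p:ℤ))
    rw [hn] at h2
    have h3 : p ∣ 1 := by exact_mod_cast h2
    exact hp.one_lt.ne' (Nat.dvd_one.1 h3)
  have hdeg : f.natDegree ≤ k := by
    refine (Polynomial.natDegree_prod_le _ _).trans ?_
    refine (Finset.sum_le_card_nsmul _ _ 1 (fun i _ => Polynomial.natDegree_linear_le)).trans ?_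
    simp
  refine le_trans ?_ ((Polynomial.card_roots' f).trans hdeg)
  refine le_trans ?_ (Multiset.toFinset_card_le _)
  apply Finset.card_le_card_of_injOn (fun r : ℕ => (r : ZMod p))
  · intro r hr
    simp only [Finset.coe_filter, Set.mem_ofPred_eq] at hr
    simp only [Finset.mem_coe, Multiset.mem_toFinset, Polynomial.mem_roots hf0, Polynomial.IsRoot]
    have := hev r
    rw [Int.cast_natCast] at this
    rw [this]
    exact (ZMod.intCast_zmod_eq_zero_iff_dvd _ p).2 hr.2
  · intro r hr r' hr' e
    simp only [Finset.coe_filter, Set.mem_ofPred_eq, Finset.mem_range] at hr hr'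
    have := (ZMod.natCast_eq_natCast_iff' _ _ _).1 e
    rwa [Nat.mod_eq_of_lt hr.1, Nat.mod_eq_of_lt hr'.1] at this

lemma dvd_prod_mod {k : ℕ} (a b : Fin k → ℤ) (m n d : ℤ) (h : n ≡ m [ZMOD d]) :
    d ∣ (∏ i, (a i * n + b i)) ↔ d ∣ ∏ i, (a i * m + b i) := by
  have : (∏ i, (a i * n + b i)) ≡ ∏ i, (a i * m + b i) [ZMOD d] := by
    apply Int.ModEq.prod
    intro i _
    exact (h.mul_left _).add_right _
  rw [← Int.modEq_zero_iff_dvd, ← Int.modEq_zero_iff_dvd]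
  exact ⟨fun h' => this.symm.trans h', fun h' => this.trans h'⟩

lemma roots_mod_L {k : ℕ} (a b : Fin k → ℤ) 
    (h : ∀ p : ℕ, p.Prime → p % 4 = 3 → ∃ n : ℤ, Int.gcd (∏ i, (a i * n + b i)) (p : ℤ) = 1)
    (L : ℕ) (hL : Squarefree L) (hL3 : InP3 L) :
    ((Finset.range L).filter (fun r : ℕ => (L : ℤ) ∣ ∏ i, (a i * (r : ℤ) + b i))).card ≤ k ^ L.primeFactors.card := by
  classical
  have : ((Finset.range L).filter (fun r : ℕ => (L : ℤ) ∣ ∏ i, (a i * (r : ℤ) + b i))).card ≤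
      (L.primeFactors.pi (fun p => (Finset.range p).filter (fun r : ℕ => (p : ℤ) ∣ ∏ i, (a i * (r : ℤ) + b i)))).card := by
    apply Finset.card_le_card_of_injOn (fun r p _ => r % p)
    · intro r hr
      simp only [Finset.coe_filter, Set.mem_ofPred_eq] at hr
      simp only [Finset.mem_coe, Finset.mem_pi, Finset.mem_filter, Finset.mem_range]
      intro p hp
      have hp' := Nat.prime_of_mem_primeFactors hp
      refine ⟨Nat.mod_lt _ hp'.pos, ?_⟩
      rw [dvd_prod_mod a b r]
      · exact (Int.natCast_dvd_natCast.2 (Nat.dvd_of_mem_primeFactors hp)).trans hr.2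
      · exact (Int.natCast_modEq_iff).2 (Nat.mod_modEq _ _)
    · intro r hr r' hr' e
      simp only [Finset.coe_filter, Set.mem_ofPred_eq, Finset.mem_range] at hr hr'
      have e' : ∀ p ∈ L.primeFactors, r ≡ r' [MOD p] := fun p hp => congrFun (congrFun e p) hp
      have : r ≡ r' [MOD L] := by
        rw [← Nat.prod_primeFactors_of_squarefree hL]
        rw [Nat.modEq_iff_dvd]
        push_cast
        apply Finset.prod_dvd_of_coprime
        · intro p hp q hq hpq
          simp only [Function.onFun]
          rw [Nat.isCoprime_iff_coprime]
          exact (Nat.coprime_primes (Nat.prime_of_mem_primeFactors hp) (Nat.prime_of_mem_primeFactors hq)).2 hpq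
        · intro p hp
          exact (Nat.modEq_iff_dvd).1 (e' p hp)
      exact Nat.ModEq.eq_of_lt_of_lt this hr.1 hr'.1
  refine this.trans ?_
  rw [Finset.card_pi]
  apply Finset.prod_le_pow_card
  intro p hp
  have hp' := Nat.prime_of_mem_primeFactors hp
  exact roots_mod_p a b p hp' (h p hp' (hL3 p hp' (Nat.dvd_of_mem_primeFactors hp)))

lemma count_AP (X : ℝ) (L : ℕ) (hL : 0 < L) (hLX : (L : ℝ) ≤ X) (hX : 1 ≤ X) (v : ℤ) :
    (((Finset.Icc ⌈X⌉ ⌊2 * X⌋).filter (fun n => n ≡ v [ZMOD L])).card : ℝ) ≤ 3 * X / L := by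
  have hI : Finset.Icc ⌈X⌉ ⌊2 * X⌋ = Finset.Ioc (⌈X⌉ - 1) ⌊2 * X⌋ := by
    ext n; simp [Finset.mem_Icc, Finset.mem_Ioc]
  have h := Int.Ioc_filter_modEq_card (⌈X⌉ - 1) ⌊2 * X⌋ (r := (L : ℤ)) (by exact_mod_cast hL) v
  rw [hI]
  have hL' : (0:ℝ) < L := by exact_mod_cast hL
  have h1 : (1:ℝ) ≤ X / L := by rw [le_div_iff₀ hL']; linarith
  have h3 : 3 * X / L = 3 * (X / L) := by ring
  have h2 : ((⌊2*X⌋:ℤ):ℝ) ≤ 2 * X := Int.floor_le _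
  have h4 : X ≤ (⌈X⌉:ℤ) := Int.le_ceil _
  have h5 : ((((⌊((⌊2 * X⌋:ℤ) - v : ℚ) / ((L:ℤ) : ℚ)⌋ - ⌊(((⌈X⌉ - 1 : ℤ):ℚ) - v) / ((L:ℤ) : ℚ)⌋) : ℤ)) : ℝ) ≤ 3 * X / L := by
    have f1 := Int.floor_le (((⌊2 * X⌋:ℤ) - v : ℚ) / ((L:ℤ) : ℚ))
    have f2 := Int.lt_floor_add_one ((((⌈X⌉ - 1 : ℤ):ℚ) - v) / ((L:ℤ) : ℚ))
    set u := ⌊((⌊2 * X⌋:ℤ) - v : ℚ) / ((L:ℤ) : ℚ)⌋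
    set u' := ⌊(((⌈X⌉ - 1 : ℤ):ℚ) - v) / ((L:ℤ) : ℚ)⌋
    have f1' : (u : ℝ) ≤ (((⌊2 * X⌋:ℤ) - v : ℝ) / (L : ℝ)) := by exact_mod_cast f1
    have f2' : ((((⌈X⌉ - 1 : ℤ):ℝ) - v) / (L : ℝ)) < u' + 1 := by exact_mod_cast f2
    push_cast at f2' ⊢
    have f3 : (((⌊2 * X⌋:ℤ) - v : ℝ) / (L : ℝ)) - ((((⌈X⌉ :ℤ):ℝ) - 1 - v) / (L : ℝ)) ≤ (X + X) / L := by
      rw [← sub_div]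
      gcongr
      linarith
    have f4 : (X + X) / L = 2 * (X / L) := by ring
    linarith
  have h6 : (((((Finset.Ioc (⌈X⌉ - 1) ⌊2 * X⌋).filter (fun n => n ≡ v [ZMOD L])).card : ℤ)) : ℝ) ≤ 3 * X / L := by
    rw [h, Int.cast_max]
    refine max_le h5 ?_
    rw [Int.cast_zero]
    positivity
  exact_mod_cast h6

lemma count_dvd {k : ℕ} (a b : Fin k → ℤ) 
    (h : ∀ p : ℕ, p.Prime → p % 4 = 3 → ∃ n : ℤ, Int.gcd (∏ i, (a i * n + b i)) (p : ℤ) = 1)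
    (L : ℕ) (hL : Squarefree L) (hL3 : InP3 L) (X : ℝ) (hLX : (L : ℝ) ≤ X) (hX : 1 ≤ X) :
    (((Finset.Icc ⌈X⌉ ⌊2 * X⌋).filter (fun n => (L : ℤ) ∣ ∏ i, (a i * n + b i))).card : ℝ)
      ≤ (k : ℝ) ^ L.primeFactors.card * (3 * X / L) := by
  classical
  have hL0 : 0 < L := Nat.pos_of_ne_zero hL.ne_zero
  set R := (Finset.range L).filter (fun r : ℕ => (L : ℤ) ∣ ∏ i, (a i * (r : ℤ) + b i))
  have hsub : (Finset.Icc ⌈X⌉ ⌊2 * X⌋).filter (fun n => (L : ℤ) ∣ ∏ i, (a i * n + b i)) ⊆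
      R.biUnion (fun r => (Finset.Icc ⌈X⌉ ⌊2 * X⌋).filter (fun n => n ≡ (r : ℤ) [ZMOD L])) := by
    intro n hn
    rw [Finset.mem_filter] at hn
    rw [Finset.mem_biUnion]
    have hL0' : (0:ℤ) < L := by exact_mod_cast hL0
    have e : ((n % L).toNat : ℤ) = n % L := Int.toNat_of_nonneg (Int.emod_nonneg _ hL0'.ne')
    have e2 : n ≡ ((n % L).toNat : ℤ) [ZMOD L] := by rw [e]; exact (Int.mod_modEq _ _).symm
    refine ⟨(n % L).toNat, ?_, ?_⟩
    · simp only [R, Finset.mem_filter, Finset.mem_range]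
      refine ⟨?_, (dvd_prod_mod a b _ _ _ e2).1 hn.2⟩
      have := Int.emod_lt_of_pos n hL0'
      omega
    · exact Finset.mem_filter.2 ⟨hn.1, e2⟩
  have h1 := (Finset.card_le_card hsub).trans Finset.card_biUnion_le
  have h2 : (((Finset.Icc ⌈X⌉ ⌊2 * X⌋).filter (fun n => (L : ℤ) ∣ ∏ i, (a i * n + b i))).card : ℝ) ≤ 
    ∑ r ∈ R, (((Finset.Icc ⌈X⌉ ⌊2 * X⌋).filter (fun n => n ≡ (r : ℤ) [ZMOD L])).card : ℝ) := by exact_mod_cast h1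
  refine h2.trans ((Finset.sum_le_card_nsmul R _ (3 * X / L) (fun r _ => count_AP X L hL0 hLX hX (r : ℤ))).trans ?_)
  rw [nsmul_eq_mul]
  apply mul_le_mul_of_nonneg_right _ (by positivity)
  exact_mod_cast roots_mod_L a b h L hL hL3

lemma sumL (X : ℝ) (hX1 : 1 ≤ X) (hX : 1 < Real.log X) (k : ℕ) (T : Finset ℕ)
    (hT : ∀ L ∈ T, Squarefree L ∧ InP3 L ∧ (L : ℝ) ≤ X) :
    ∑ L ∈ T, ((16 * k : ℕ) : ℝ) ^ L.primeFactors.card / L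
      ≤ Real.exp 1 * (3 / 2 * (1 + Real.log X)) ^ (8 * k) := by
  set l := Real.log X with hl
  have hl0 : 0 < l := by linarith
  have hX0 : 0 < X := by linarith
  set s := 1 + 1 / l with hs
  have hs1 : 1 < s := by rw [hs]; linarith [show 0 < 1 / l by positivity]
  set M := ⌊X⌋₊ + 1
  set Q := (Nat.primesBelow M).filter (fun p => p % 4 = 3)
  have hB := prod_bound s hs1 M
  have e : 1 / (s - 1) = l := by rw [hs]; simp
  rw [e] at hB
  set g : ℕ → ℝ := fun p => ((16 * k : ℕ) : ℝ) * ((p : ℝ) ^ s)⁻¹ with hg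
  have hg0 : ∀ p, 0 ≤ g p := fun p => by simp only [hg]; positivity
  have step1 : ∀ L ∈ T, ((16 * k : ℕ) : ℝ) ^ L.primeFactors.card / L
      ≤ Real.exp 1 * ∏ p ∈ L.primeFactors, g p := by
    intro L hL
    obtain ⟨hsq, h3, hLX⟩ := hT L hL
    have hL0 : (0:ℝ) < L := by exact_mod_cast Nat.pos_of_ne_zero hsq.ne_zero
    have e1 : ∏ p ∈ L.primeFactors, g p = ((16 * k : ℕ) : ℝ) ^ L.primeFactors.card * ((L : ℝ) ^ s)⁻¹ := by
      simp only [hg]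
      rw [Finset.prod_mul_distrib, Finset.prod_const, Finset.prod_inv_distrib,
        Real.finsetProd_rpow _ _ (fun i _ => by positivity), ← Nat.cast_prod,
        Nat.prod_primeFactors_of_squarefree hsq]
    rw [e1, div_eq_mul_inv, mul_left_comm]
    apply mul_le_mul_of_nonneg_left _ (by positivity)
    rw [← div_eq_mul_inv, le_div_iff₀ (by positivity), hs, Real.rpow_add hL0, Real.rpow_one,
      inv_mul_cancel_left₀ hL0.ne']
    calc (L : ℝ) ^ (1 / l) ≤ X ^ (1 / l) := Real.rpow_le_rpow hL0.le hLX (by positivity)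
      _ = Real.exp 1 := by
        rw [Real.rpow_def_of_pos hX0, ← hl, mul_one_div_cancel hl0.ne']
  refine (Finset.sum_le_sum step1).trans ?_
  rw [← Finset.mul_sum]
  apply mul_le_mul_of_nonneg_left _ (by positivity)
  have step2 : ∑ L ∈ T, ∏ p ∈ L.primeFactors, g p ≤ ∏ p ∈ Q, (1 + g p) := by
    rw [Finset.prod_one_add]
    have hinj : Set.InjOn Nat.primeFactors (T : Set ℕ) := by
      intro x hx y hy hxy
      rw [← Nat.prod_primeFactors_of_squarefree (hT x hx).1,
        ← Nat.prod_primeFactors_of_squarefree (hT y hy).1, hxy]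
    rw [← Finset.sum_image (f := fun t : Finset ℕ => ∏ p ∈ t, g p) hinj]
    apply Finset.sum_le_sum_of_subset_of_nonneg
    · intro t ht
      obtain ⟨L, hL, rfl⟩ := Finset.mem_image.1 ht
      obtain ⟨hsq, h3, hLX⟩ := hT L hL
      rw [Finset.mem_powerset]
      intro p hp
      have hp' := Nat.prime_of_mem_primeFactors hp
      have hd := Nat.dvd_of_mem_primeFactors hp
      simp only [Q, Finset.mem_filter, Nat.mem_primesBelow]
      refine ⟨⟨?_, hp'⟩, h3 p hp' hd⟩
      have := Nat.le_of_dvd (Nat.pos_of_ne_zero hsq.ne_zero) hd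
      have := Nat.le_floor hLX
      omega
    · intro t _ _
      exact Finset.prod_nonneg (fun p _ => hg0 p)
  refine step2.trans ?_
  calc ∏ p ∈ Q, (1 + g p) ≤ ∏ p ∈ Q, (1 + ((p : ℝ) ^ s)⁻¹) ^ (16 * k) := by
        apply Finset.prod_le_prod
        · intro p _; linarith [hg0 p]
        · intro p _
          exact one_add_mul_le_pow (by linarith [show (0:ℝ) ≤ ((p : ℝ) ^ s)⁻¹ by positivity]) _
    _ = ((∏ p ∈ Q, (1 + ((p : ℝ) ^ s)⁻¹)) ^ 2) ^ (8 * k) := by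
        rw [Finset.prod_pow, ← pow_mul]; congr 1; ring
    _ ≤ _ := pow_le_pow_left₀ (by positivity) hB _

lemma squarefree_lcm' {m n : ℕ} (hm : Squarefree m) (hn : Squarefree n) : Squarefree (m.lcm n) := by
  rw [Nat.squarefree_iff_factorization_le_one (Nat.lcm_ne_zero hm.ne_zero hn.ne_zero)]
  intro p
  rw [Nat.factorization_lcm hm.ne_zero hn.ne_zero, Finsupp.sup_apply]
  exact sup_le (hm.natFactorization_le_one p) (hn.natFactorization_le_one p)

lemma InP3_lcm {m n : ℕ} (hm : InP3 m) (hn : InP3 n) : InP3 (m.lcm n) := by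
  intro p hp hd
  have : p ∣ m * n := hd.trans (Nat.lcm_dvd_mul m n)
  rcases hp.dvd_mul.1 this with h | h
  · exact hm p hp h
  · exact hn p hp h

lemma card_divisors_sqf {n : ℕ} (hn : Squarefree n) : n.divisors.card ≤ 2 ^ n.primeFactors.card := by
  rw [Nat.card_divisors hn.ne_zero]
  apply Finset.prod_le_pow_card
  intro p _
  have := hn.natFactorization_le_one p
  omega

/-- lcm of a quadruple -/
def lcm4 (q : ℕ × ℕ × ℕ × ℕ) : ℕ := (q.1.lcm q.2.1).lcm (q.2.2.1.lcm q.2.2.2)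

lemma fourth_moment {k : ℕ} (a b : Fin k → ℤ)
    (h : ∀ p : ℕ, p.Prime → p % 4 = 3 → ∃ n : ℤ, Int.gcd (∏ i, (a i * n + b i)) (p : ℤ) = 1)
    (X : ℝ) (hX1 : 1 ≤ X) (hX : 1 < Real.log X) (S : Finset ℕ)
    (hS : ∀ d ∈ S, Squarefree d ∧ InP3 d ∧ (d : ℝ) < X ^ ((1 : ℝ) / 10)) :
    ∑ n ∈ Finset.Icc ⌈X⌉ ⌊2 * X⌋, ((S.filter (fun d : ℕ => (d : ℤ) ∣ ∏ i, (a i * n + b i))).card : ℝ) ^ 4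
      ≤ 3 * X * (Real.exp 1 * (3 / 2 * (1 + Real.log X)) ^ (8 * k)) := by
  classical
  set I := Finset.Icc ⌈X⌉ ⌊2 * X⌋
  set q4 := S ×ˢ S ×ˢ S ×ˢ S with hq4
  have hlcm : ∀ q ∈ q4, Squarefree (lcm4 q) ∧ InP3 (lcm4 q) ∧ (lcm4 q : ℝ) ≤ X := by
    rintro ⟨x, y, z, t⟩ hq
    simp only [hq4, Finset.mem_product] at hq
    obtain ⟨hx, hy, hz, ht⟩ := hq
    have hx := hS x hx
    have hy := hS y hy
    have hz := hS z hz
    have ht := hS t ht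
    refine ⟨squarefree_lcm' (squarefree_lcm' hx.1 hy.1) (squarefree_lcm' hz.1 ht.1),
      InP3_lcm (InP3_lcm hx.2.1 hy.2.1) (InP3_lcm hz.2.1 ht.2.1), ?_⟩
    have hxp := Nat.pos_of_ne_zero hx.1.ne_zero
    have hyp := Nat.pos_of_ne_zero hy.1.ne_zero
    have hzp := Nat.pos_of_ne_zero hz.1.ne_zero
    have htp := Nat.pos_of_ne_zero ht.1.ne_zero
    have h1 : lcm4 (x, y, z, t) ≤ (x * y) * (z * t) := by
      apply Nat.le_of_dvd (by positivity)
      exact (Nat.lcm_dvd_mul _ _).trans (mul_dvd_mul (Nat.lcm_dvd_mul _ _) (Nat.lcm_dvd_mul _ _))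
    have h2 : (lcm4 (x, y, z, t) : ℝ) ≤ (x * y) * (z * t) := by exact_mod_cast h1
    set u := X ^ ((1 : ℝ) / 10)
    have hu : 0 ≤ u := by positivity
    calc (lcm4 (x, y, z, t) : ℝ) ≤ (x * y) * (z * t) := h2
      _ ≤ (u * u) * (u * u) := by
        have := hx.2.2.le
        have := hy.2.2.le
        have := hz.2.2.le
        have := ht.2.2.le
        gcongr
      _ = X ^ ((4 : ℝ) / 10) := by
        simp only [u]
        rw [← Real.rpow_add (by linarith), ← Real.rpow_add (by linarith)]
        norm_num
      _ ≤ X ^ (1 : ℝ) := Real.rpow_le_rpow_of_exponent_le hX1 (by norm_num)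
      _ = X := Real.rpow_one X
  have e1 : ∀ n : ℤ, (S.filter (fun d : ℕ => (d : ℤ) ∣ ∏ i, (a i * n + b i))).card ^ 4 =
      (q4.filter (fun q => (lcm4 q : ℤ) ∣ ∏ i, (a i * n + b i))).card := by
    intro n
    have : q4.filter (fun q => (lcm4 q : ℤ) ∣ ∏ i, (a i * n + b i)) =
        (S.filter (fun d : ℕ => (d : ℤ) ∣ ∏ i, (a i * n + b i))) ×ˢ (S.filter (fun d : ℕ => (d : ℤ) ∣ ∏ i, (a i * n + b i)))
        ×ˢ (S.filter (fun d : ℕ => (d : ℤ) ∣ ∏ i, (a i * n + b i))) ×ˢ (S.filter (fun d : ℕ => (d : ℤ) ∣ ∏ i, (a i * n + b i))) := by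
      ext ⟨x, y, z, t⟩
      simp only [hq4, lcm4, Finset.mem_filter, Finset.mem_product, Int.natCast_dvd, Nat.lcm_dvd_iff]
      tauto
    rw [this]
    simp only [Finset.card_product]
    ring
  have e2 : ∑ n ∈ I, (S.filter (fun d : ℕ => (d : ℤ) ∣ ∏ i, (a i * n + b i))).card ^ 4 =
      ∑ q ∈ q4, (I.filter (fun n => (lcm4 q : ℤ) ∣ ∏ i, (a i * n + b i))).card := by
    rw [Finset.sum_congr rfl (fun n _ => e1 n)]
    exact Finset.sum_card_bipartiteAbove_eq_sum_card_bipartiteBelow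
      (fun (n : ℤ) (q : ℕ × ℕ × ℕ × ℕ) => (lcm4 q : ℤ) ∣ ∏ i, (a i * n + b i))
  have e3 : ∑ n ∈ I, ((S.filter (fun d : ℕ => (d : ℤ) ∣ ∏ i, (a i * n + b i))).card : ℝ) ^ 4 =
      ∑ q ∈ q4, ((I.filter (fun n => (lcm4 q : ℤ) ∣ ∏ i, (a i * n + b i))).card : ℝ) := by
    exact_mod_cast e2
  rw [e3]
  have e4 : ∀ q ∈ q4, ((I.filter (fun n => (lcm4 q : ℤ) ∣ ∏ i, (a i * n + b i))).card : ℝ)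
      ≤ (k : ℝ) ^ (lcm4 q).primeFactors.card * (3 * X / (lcm4 q : ℕ)) := fun q hq =>
    count_dvd a b h _ (hlcm q hq).1 (hlcm q hq).2.1 X (hlcm q hq).2.2 hX1
  refine (Finset.sum_le_sum e4).trans ?_
  rw [← Finset.sum_fiberwise_of_maps_to (t := q4.image lcm4) (g := lcm4)
    (fun q hq => Finset.mem_image_of_mem _ hq)]
  have hT : ∀ L ∈ q4.image lcm4, Squarefree L ∧ InP3 L ∧ (L : ℝ) ≤ X := by
    intro L hL
    obtain ⟨q, hq, rfl⟩ := Finset.mem_image.1 hL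
    exact hlcm q hq
  refine le_trans ?_ (mul_le_mul_of_nonneg_left (sumL X hX1 hX k _ hT) (by linarith))
  rw [Finset.mul_sum]
  apply Finset.sum_le_sum
  intro L hL
  have hsq := (hT L hL).1
  have c1 : (q4.filter (fun q => lcm4 q = L)).card ≤ 16 ^ L.primeFactors.card := by
    have : q4.filter (fun q => lcm4 q = L) ⊆ L.divisors ×ˢ L.divisors ×ˢ L.divisors ×ˢ L.divisors := by
      rintro ⟨x, y, z, t⟩ hq
      rw [Finset.mem_filter] at hq
      have hd : lcm4 (x, y, z, t) ∣ L := hq.2 ▸ dvd_rfl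
      simp only [lcm4, Nat.lcm_dvd_iff] at hd
      simp only [Finset.mem_product, Nat.mem_divisors]
      have := hsq.ne_zero
      tauto
    refine (Finset.card_le_card this).trans ?_
    simp only [Finset.card_product]
    calc _ = L.divisors.card ^ 4 := by ring
      _ ≤ (2 ^ L.primeFactors.card) ^ 4 := Nat.pow_le_pow_left (card_divisors_sqf hsq) 4
      _ = _ := by rw [← pow_mul, mul_comm, pow_mul]; norm_num
  have c2 : ((q4.filter (fun q => lcm4 q = L)).card : ℝ) ≤ 16 ^ L.primeFactors.card := by exact_mod_cast c1
  rw [Finset.sum_congr rfl (g := fun _ => (k : ℝ) ^ L.primeFactors.card * (3 * X / L))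
    (fun q hq => by rw [(Finset.mem_filter.1 hq).2]), Finset.sum_const, nsmul_eq_mul]
  calc _ ≤ (16 : ℝ) ^ L.primeFactors.card * ((k : ℝ) ^ L.primeFactors.card * (3 * X / L)) := by
        apply mul_le_mul_of_nonneg_right c2
        positivity
    _ = _ := by push_cast; rw [mul_pow]; ring

theorem sieve_weights_second_moment :
    ∃ C : ℝ, 0 < C ∧ ∃ X0 : ℝ, ∀ X : ℝ, X0 ≤ X →
    ∀ (k p0 W : ℕ) (a b : Fin k → ℤ) (v0 : ℤ) (lam : ℕ → ℝ) (w : ℤ → ℝ),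
    -- sieve setup
    0 < k → (k : ℝ) ≤ Real.log X ^ ((1 : ℝ) / 5) →
    p0.Prime → Real.log (Real.log X) / 2 ≤ (p0 : ℝ) → (p0 : ℝ) ≤ X →
    W = ∏ p ∈ (Finset.range (⌊2 * Real.log X ^ ((1 : ℝ) / 3)⌋₊ + 1)).filter
          (fun p : ℕ => p.Prime ∧ (p : ℝ) ≤ 2 * Real.log X ^ ((1 : ℝ) / 3) ∧ p % 4 = 3 ∧ p ≠ p0), p →
    Function.Injective (fun i => (a i, b i)) →
    (∀ p : ℕ, p.Prime → p % 4 = 3 → ∃ n : ℤ, Int.gcd (∏ i, (a i * n + b i)) (p : ℤ) = 1) →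
    (∀ i, 0 < a i ∧ (a i : ℝ) ≤ Real.log X ^ ((1 : ℝ) / 3) ∧
      Int.gcd (2 * (p0 : ℤ)) (a i) = 1 ∧ 0 < b i ∧ (b i : ℝ) < X) →
    Int.gcd (∏ i, (a i * v0 + b i)) (W : ℤ) = 1 →
    (∀ d : ℕ, ¬(Squarefree d ∧ (d : ℝ) < X ^ ((1 : ℝ) / 10) ∧ InP3 d ∧
      Nat.Coprime d (p0 * W)) → lam d = 0) →
    (∀ d : ℕ, |lam d| ≤ Real.log X ^ ((k : ℝ) / 2)) →
    (∀ n : ℤ, w n = if n % (W : ℤ) = v0 % (W : ℤ) then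
        (∑ d ∈ (∏ i, (a i * n + b i)).natAbs.divisors, lam d) ^ 2 else 0) →
    -- conclusion
    ∑ n ∈ Finset.Icc ⌈X⌉ ⌊2 * X⌋, (w n) ^ 2 ≤ C * X * Real.log X ^ (16 * k ^ 2) := by
  classical
  refine ⟨3 * Real.exp 1, by positivity, Real.exp 4, ?_⟩
  intro X hX k p0 W a b v0 lam w hk _ _ _ _ _ _ hadm hab _ hlam0 hlam hw
  have hX0 : 0 < X := (Real.exp_pos 4).trans_le hX
  have hl : 4 ≤ Real.log X := (Real.le_log_iff_exp_le hX0).2 hX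
  have hX1 : 1 ≤ X := (Real.one_le_exp (by norm_num)).trans hX
  set l := Real.log X with hldef
  set S := (Finset.range (⌊X⌋₊ + 1)).filter
    (fun d : ℕ => Squarefree d ∧ InP3 d ∧ (d : ℝ) < X ^ ((1 : ℝ) / 10)) with hSdef
  have hS : ∀ d ∈ S, Squarefree d ∧ InP3 d ∧ (d : ℝ) < X ^ ((1 : ℝ) / 10) :=
    fun d hd => (Finset.mem_filter.1 hd).2
  have hmemS : ∀ d : ℕ, lam d ≠ 0 → d ∈ S := by
    intro d hd
    have := not_imp_comm.1 (hlam0 d) hd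
    refine Finset.mem_filter.2 ⟨?_, this.1, this.2.2.1, this.2.1⟩
    rw [Finset.mem_range, Nat.lt_succ_iff]
    apply Nat.le_floor
    calc (d : ℝ) ≤ X ^ ((1 : ℝ) / 10) := this.2.1.le
      _ ≤ X ^ (1 : ℝ) := Real.rpow_le_rpow_of_exponent_le hX1 (by norm_num)
      _ = X := Real.rpow_one X
  set B := l ^ ((k : ℝ) / 2) with hB
  have hB0 : 0 ≤ B := by positivity
  have hB4 : B ^ 4 = l ^ (2 * k) := by
    rw [hB, ← Real.rpow_natCast, ← Real.rpow_mul (by linarith), ← Real.rpow_natCast]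
    congr 1
    push_cast
    ring
  have hpt : ∀ n : ℤ, (w n) ^ 2 ≤
      l ^ (2 * k) * ((S.filter (fun d : ℕ => (d : ℤ) ∣ ∏ i, (a i * n + b i))).card : ℝ) ^ 4 := by
    intro n
    rw [hw n]
    split_ifs with hc
    · rw [← hB4, ← mul_pow, ← pow_mul]
      rw [← Even.pow_abs (by decide : Even (2 * 2))]
      apply pow_le_pow_left₀ (abs_nonneg _)
      calc |∑ d ∈ (∏ i, (a i * n + b i)).natAbs.divisors, lam d|
          ≤ ∑ d ∈ (∏ i, (a i * n + b i)).natAbs.divisors, |lam d| := Finset.abs_sum_le_sum_abs _ _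
        _ ≤ ∑ d ∈ S.filter (fun d : ℕ => (d : ℤ) ∣ ∏ i, (a i * n + b i)), |lam d| := by
          rw [← Finset.sum_filter_ne_zero]
          apply Finset.sum_le_sum_of_subset_of_nonneg _ (fun d _ _ => abs_nonneg _)
          intro d hd'
          obtain ⟨hd, hne⟩ := Finset.mem_filter.1 hd'
          refine Finset.mem_filter.2 ⟨hmemS d (abs_ne_zero.1 hne), ?_⟩
          exact Int.natCast_dvd.2 (Nat.dvd_of_mem_divisors hd)
        _ ≤ (S.filter (fun d : ℕ => (d : ℤ) ∣ ∏ i, (a i * n + b i))).card • B :=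
          Finset.sum_le_card_nsmul _ _ _ (fun d _ => hlam d)
        _ = _ := by rw [nsmul_eq_mul, mul_comm]
    · have : 0 ≤ l := by linarith
      simp only [ne_eq, OfNat.ofNat_ne_zero, not_false_eq_true, zero_pow]
      positivity
  refine (Finset.sum_le_sum (fun n _ => hpt n)).trans ?_
  rw [← Finset.mul_sum]
  have hfm := fourth_moment a b hadm X hX1 (by linarith) S hS
  rw [← hldef] at hfm
  have hl0 : 0 ≤ l := by linarith
  have hfin : (3 / 2 * (1 + l)) ^ (8 * k) ≤ l ^ (14 * k) := by
    rw [pow_mul, pow_mul]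
    apply pow_le_pow_left₀ (by positivity)
    calc (3 / 2 * (1 + l)) ^ 8 ≤ (2 * l) ^ 8 := pow_le_pow_left₀ (by positivity) (by linarith) 8
      _ = 4 ^ 4 * l ^ 8 := by ring
      _ ≤ l ^ 4 * l ^ 8 := by gcongr
      _ = l ^ 12 := by ring
      _ ≤ l ^ 14 := pow_le_pow_right₀ (by linarith) (by norm_num)
  calc l ^ (2 * k) * _ ≤ l ^ (2 * k) * (3 * X * (Real.exp 1 * l ^ (14 * k))) := by
        apply mul_le_mul_of_nonneg_left _ (by positivity)
        refine hfm.trans ?_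
        gcongr
    _ = 3 * Real.exp 1 * X * l ^ (16 * k) := by
        rw [show 16 * k = 2 * k + 14 * k by ring, pow_add]; ring
    _ ≤ _ := by
        apply mul_le_mul_of_nonneg_left _ (by positivity)
        apply pow_le_pow_right₀ (by linarith)
        nlinarith
end

section
/- Fix C > 0. There exists a constant c = c(C) > 0 such that for all sufficiently large t and every positive integer a with a ≤ (log t)^C, one has #{m < t : m ∈ ⟨P1⟩, gcd(m, a) = 1} ≥ c · t · (log t)^{−1/2} · ∏_{p | a, p ≡ 1 (mod 4)} (1 − 1/p), where the product is over the prime divisors of a congruent to 1 mod 4. -/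
/-- `⟨P1⟩`: positive integers all of whose prime factors are `≡ 1 (mod 4)` (contains 1). -/
def InP1 (n : ℕ) : Prop := 0 < n ∧ ∀ p : ℕ, p.Prime → p ∣ n → p % 4 = 1

namespace P1Count
open Finset ArithmeticFunction

lemma sum_antidiag (F : ℕ → ℕ → ℝ) (N : ℕ) :
    ∑ n ∈ Ioc 0 N, ∑ x ∈ n.divisorsAntidiagonal, F x.1 x.2
      = ∑ d ∈ Ioc 0 N, ∑ e ∈ Ioc 0 (N / d), F d e := by
  trans ∑ x ∈ Ioc 0 N ×ˢ Ioc 0 N with x.1 * x.2 ≤ N, F x.1 x.2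
  · trans ∑ n ∈ Ioc 0 N, ∑ x ∈ Ioc 0 N ×ˢ Ioc 0 N with x.1 * x.2 = n, F x.1 x.2
    · refine sum_congr rfl fun n hn ↦ ?_
      simp only [mem_Ioc] at hn
      rw [Nat.divisorsAntidiagonal_eq_prod_filter_of_le hn.1.ne' hn.2]
    · simp_rw [sum_filter]
      rw [sum_comm]
      exact sum_congr rfl fun _ _ ↦ (by simp_all)
  · rw [sum_filter, sum_product]
    refine sum_congr rfl fun n hn ↦ ?_
    rw [← sum_filter]
    congr 1
    ext e
    simp only [mem_filter, mem_Ioc] at hn ⊢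
    rw [Nat.le_div_iff_mul_le hn.1, mul_comm e n]
    constructor
    · rintro ⟨⟨h1, _⟩, h2⟩; exact ⟨h1, h2⟩
    · rintro ⟨h1, h2⟩; exact ⟨⟨h1, le_trans (Nat.le_mul_of_pos_left e hn.1) h2⟩, h2⟩

lemma log_conv (g : ℕ → ℝ) (hg : ∀ m n, g (m * n) = g m * g n) (N : ℕ) :
    ∑ n ∈ Ioc 0 N, g n * Real.log n
      = ∑ d ∈ Ioc 0 N, g d * Λ d * ∑ e ∈ Ioc 0 (N / d), g e := by
  have := sum_antidiag (fun d e => g d * Λ d * g e) N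
  simp only [mul_sum]
  rw [← this]
  refine sum_congr rfl fun n hn ↦ ?_
  rw [← vonMangoldt_sum, mul_sum, Nat.sum_divisorsAntidiagonal (fun d e => g d * Λ d * g e)]
  refine sum_congr rfl fun d hd ↦ ?_
  have hd' := Nat.mul_div_cancel' (Nat.dvd_of_mem_divisors hd)
  conv_lhs => rw [← hd', hg]
  ring

/-- the character mod 4 -/
noncomputable def chi (n : ℕ) : ℝ := if n % 4 = 1 then 1 else if n % 4 = 3 then -1 else 0

lemma chi_mul (m n : ℕ) : chi (m * n) = chi m * chi n := by
  unfold chi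
  rw [Nat.mul_mod]
  have h1 := Nat.mod_lt m (show 0 < 4 by norm_num)
  have h2 := Nat.mod_lt n (show 0 < 4 by norm_num)
  generalize m % 4 = a at *
  generalize n % 4 = b at *
  interval_cases a <;> interval_cases b <;> norm_num

noncomputable def A (n : ℕ) : ℝ := if n % 4 = 1 ∨ n % 4 = 2 then 1 else 0

lemma A_succ (n : ℕ) : A (n + 1) = A n + chi (n + 1) := by
  unfold A chi
  have h1 := Nat.mod_lt n (show 0 < 4 by norm_num)
  rw [Nat.add_mod]
  generalize n % 4 = a at *
  interval_cases a <;> norm_num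

lemma A_nonneg (n : ℕ) : 0 ≤ A n := by unfold A; split_ifs <;> norm_num
lemma A_le (n : ℕ) : A n ≤ 1 := by unfold A; split_ifs <;> norm_num
lemma chi_abs (n : ℕ) : |chi n| ≤ 1 := by unfold chi; split_ifs <;> norm_num

lemma alt_sum (g : ℕ → ℝ) (M : ℕ) (hg : ∀ n, M < n → g (n + 1) ≤ g n) (N : ℕ) (hN : M ≤ N) :
    A N * g (N + 1) - A M * g (M + 1) ≤ ∑ n ∈ Ioc M N, chi n * g n ∧
    ∑ n ∈ Ioc M N, chi n * g n ≤ A N * g (N + 1) - A M * g (M + 1) + g (M + 1) - g (N + 1) := by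
  induction N, hN using Nat.le_induction with
  | base => simp
  | succ N hN ih =>
    rw [sum_Ioc_succ_top hN]
    have h1 := hg (N + 1) (by omega)
    have h2 := A_succ N
    have h3 := A_nonneg (N + 1)
    have h4 := A_le (N + 1)
    have e : A N * g (N + 1) + chi (N + 1) * g (N + 1) = A (N + 1) * g (N + 1) := by
      rw [h2]; ring
    constructor
    · nlinarith [ih.1]
    · nlinarith [ih.2]

lemma alt_sum_abs (g : ℕ → ℝ) (M : ℕ) (hg : ∀ n, M < n → g (n + 1) ≤ g n) (h0 : ∀ n, 0 ≤ g n)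
    (N : ℕ) (hN : M ≤ N) : |∑ n ∈ Ioc M N, chi n * g n| ≤ g (M + 1) := by
  obtain ⟨h1, h2⟩ := alt_sum g M hg N hN
  have h3 := A_nonneg N
  have h4 := A_le N
  have h5 := A_nonneg M
  have h6 := A_le M
  have := h0 (N + 1)
  have := h0 (M + 1)
  rw [abs_le]
  constructor <;> nlinarith

noncomputable def S1 (N : ℕ) : ℝ := ∑ n ∈ Ioc 0 N, chi n * (1 / (n : ℝ))

lemma inv_anti (n : ℕ) (hn : 0 < n) : 1 / ((n + 1 : ℕ) : ℝ) ≤ 1 / (n : ℝ) := by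
  have : (0 : ℝ) < n := by exact_mod_cast hn
  apply one_div_le_one_div_of_le this
  push_cast; linarith

lemma S1_ge (N : ℕ) (hN : 0 < N) : 2 / 3 ≤ S1 N := by
  rcases Nat.lt_or_ge N 2 with h | h
  · obtain rfl : N = 1 := by omega
    simp [S1, chi]; norm_num
  · have h1 := alt_sum_abs (fun n => 1 / (n : ℝ)) 2 (fun n hn => inv_anti n (by omega))
      (fun n => by positivity) N h
    have h2 : S1 N = S1 2 + ∑ n ∈ Ioc 2 N, chi n * (1 / (n : ℝ)) := by
      unfold S1; rw [sum_Ioc_consecutive _ (by norm_num) h]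
    have h3 : S1 2 = 1 := by
      have : Ioc 0 2 = {1, 2} := by decide
      simp [S1, this, chi]
    rw [abs_le] at h1
    norm_num at h1
    rw [h2, h3]
    norm_num
    linarith [h1.1]

lemma S1_diff (M N : ℕ) (h : M ≤ N) : |S1 N - S1 M| ≤ 1 / ((M : ℝ) + 1) := by
  have h1 := alt_sum_abs (fun n => 1 / (n : ℝ)) M (fun n hn => inv_anti n (by omega))
      (fun n => by positivity) N h
  have h2 : S1 N = S1 M + ∑ n ∈ Ioc M N, chi n * (1 / (n : ℝ)) := by
    unfold S1; rw [sum_Ioc_consecutive _ (by norm_num) h]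
  rw [h2, add_sub_cancel_left]
  simpa using h1

noncomputable def S2 (N : ℕ) : ℝ := ∑ n ∈ Ioc 0 N, chi n * (Real.log n / (n : ℝ))

lemma S2_bdd (N : ℕ) : |S2 N| ≤ 3 := by
  have hl (n : ℕ) : Real.log n / (n : ℝ) ≤ 1 := by
    rcases Nat.eq_zero_or_pos n with rfl | h
    · simp
    · have : (0 : ℝ) < n := by exact_mod_cast h
      rw [div_le_one this]
      linarith [Real.log_le_sub_one_of_pos this]
  have hl0 (n : ℕ) : 0 ≤ Real.log n / (n : ℝ) := div_nonneg (Real.log_natCast_nonneg n) (by positivity)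
  have ht (M : ℕ) : |S2 M| ≤ M := by
    unfold S2
    refine (abs_sum_le_sum_abs _ _).trans ?_
    calc _ ≤ ∑ n ∈ Ioc 0 M, (1 : ℝ) := by
          refine sum_le_sum fun n _ => ?_
          rw [abs_mul, abs_of_nonneg (hl0 n)]
          nlinarith [hl n, hl0 n, chi_abs n, abs_nonneg (chi n)]
      _ = M := by simp
  rcases Nat.lt_or_ge N 2 with h | h
  · refine (ht N).trans ?_
    exact_mod_cast (by omega : N ≤ 3)
  · have h1 := alt_sum_abs (fun n => Real.log n / (n : ℝ)) 2 (fun n hn => by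
        apply Real.log_div_self_antitoneOn
        · have : (3 : ℝ) ≤ n := by exact_mod_cast hn
          simp only [Set.mem_Ici]
          linarith [Real.exp_one_lt_d9]
        · have : (3 : ℝ) ≤ n := by exact_mod_cast hn
          simp only [Set.mem_Ici]
          push_cast
          linarith [Real.exp_one_lt_d9]
        · push_cast; linarith)
      hl0 N h
    have h2 : S2 N = S2 2 + ∑ n ∈ Ioc 2 N, chi n * (Real.log n / (n : ℝ)) := by
      unfold S2; rw [sum_Ioc_consecutive _ (by norm_num) h]
    have h3 := ht 2
    have h4 := hl (2 + 1)
    rw [h2]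
    refine (abs_add_le _ _).trans ?_
    push_cast at *
    linarith

lemma psi_eq (N : ℕ) : ∑ d ∈ Ioc 0 N, Λ d = Chebyshev.psi N := by
  simp [Chebyshev.psi]

lemma psi_le (N : ℕ) : ∑ d ∈ Ioc 0 N, Λ d ≤ 6 * N := by
  rw [psi_eq]
  refine (Chebyshev.psi_le_const_mul_self (by positivity)).trans ?_
  have : Real.log 4 ≤ 2 := by
    rw [show (4 : ℝ) = 2 ^ 2 by norm_num, Real.log_pow]
    push_cast
    linarith [Real.log_two_lt_d9]
  gcongr
  linarith

noncomputable def Mc (N : ℕ) : ℝ := ∑ d ∈ Ioc 0 N, chi d * (1 / (d : ℝ)) * Λ d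
noncomputable def M0 (N : ℕ) : ℝ := ∑ d ∈ Ioc 0 N, (1 / (d : ℝ)) * Λ d

lemma Mc_bdd (N : ℕ) : |Mc N| ≤ 14 := by
  rcases Nat.eq_zero_or_pos N with rfl | hN
  · simp [Mc]
  have hN' : (0 : ℝ) < N := by exact_mod_cast hN
  have h1 := log_conv (fun n => chi n * (1 / (n : ℝ))) (fun m n => by
    simp only [chi_mul]; push_cast; rw [one_div, one_div, one_div, mul_inv]; ring) N
  have h2 : S2 N = ∑ d ∈ Ioc 0 N, chi d * (1 / (d : ℝ)) * Λ d * S1 (N / d) := by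
    refine Eq.trans ?_ h1
    unfold S2
    refine sum_congr rfl fun n _ => by ring
  have h3 : |S2 N - S1 N * Mc N| ≤ 6 := by
    rw [h2, Mc, mul_sum, ← sum_sub_distrib]
    refine (abs_sum_le_sum_abs _ _).trans ?_
    have : ∑ d ∈ Ioc 0 N, Λ d / N ≤ 6 := by
      rw [← sum_div, div_le_iff₀ hN']; exact psi_le N
    refine le_trans (sum_le_sum fun d hd => ?_) this
    simp only [mem_Ioc] at hd
    have hd' : (0 : ℝ) < d := by exact_mod_cast hd.1
    have hS := S1_diff (N / d) N (Nat.div_le_self _ _)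
    have e : chi d * (1 / (d : ℝ)) * Λ d * S1 (N / d) - S1 N * (chi d * (1 / (d : ℝ)) * Λ d)
      = - (chi d * ((Λ d / d) * (S1 N - S1 (N / d)))) := by ring
    rw [e, abs_neg, abs_mul, abs_mul, abs_of_nonneg (div_nonneg vonMangoldt_nonneg hd'.le)]
    have hlt : (N : ℝ) / d ≤ ((N / d : ℕ) : ℝ) + 1 := by
      have := Nat.lt_mul_div_succ N hd.1
      rw [div_le_iff₀ hd']
      have h2 : (N : ℝ) < d * (((N / d : ℕ) : ℝ) + 1) := by exact_mod_cast this
      linarith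
    have h5 : 1 / (((N / d : ℕ) : ℝ) + 1) ≤ d / N := by
      rw [div_le_iff₀ hd'] at hlt
      rw [div_le_div_iff₀ (by positivity) hN']
      linarith
    have h6 : (Λ d / d) * |S1 N - S1 (N / d)| ≤ (Λ d / d) * (d / N) := by
      have : 0 ≤ Λ d / d := div_nonneg vonMangoldt_nonneg hd'.le
      gcongr
      exact hS.trans h5
    have h7 : (Λ d / d) * (d / N) = Λ d / N := by field_simp
    have h8 : 0 ≤ (Λ d / d) * |S1 N - S1 (N / d)| := 
      mul_nonneg (div_nonneg vonMangoldt_nonneg hd'.le) (abs_nonneg _)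
    nlinarith [chi_abs d, abs_nonneg (chi d)]
  have h4 := S1_ge N hN
  have h5 := S2_bdd N
  have h6 : |S1 N * Mc N| ≤ 9 := by
    have := abs_sub_abs_le_abs_sub (S1 N * Mc N) (S2 N)
    rw [abs_sub_comm] at this
    linarith
  rw [abs_mul, abs_of_nonneg (by linarith)] at h6
  nlinarith [abs_nonneg (Mc N)]

lemma log_fact (N : ℕ) : ∑ n ∈ Ioc 0 N, Real.log n = Real.log (N.factorial) := by
  induction N with
  | zero => simp
  | succ N ih =>
    rw [sum_Ioc_succ_top (Nat.zero_le N), ih, Nat.factorial_succ]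
    push_cast
    rw [Real.log_mul (by positivity) (by positivity), add_comm]

lemma M0_bounds (N : ℕ) (hN : 0 < N) : Real.log N - 1 ≤ M0 N ∧ M0 N ≤ Real.log N + 6 := by
  have hN' : (0 : ℝ) < N := by exact_mod_cast hN
  have h1 := log_conv (fun n => 1) (fun m n => by norm_num) N
  simp only [one_mul, sum_const, Nat.card_Ioc, smul_eq_mul, mul_one, nsmul_eq_mul] at h1
  rw [log_fact] at h1
  have hup : Real.log (N.factorial) ≤ N * Real.log N := by
    rw [← log_fact]
    calc _ ≤ ∑ n ∈ Ioc 0 N, Real.log N := by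
          refine sum_le_sum fun n hn => ?_
          simp only [mem_Ioc] at hn
          apply Real.log_le_log <;> norm_cast <;> omega
      _ = _ := by simp
  have hlo := Stirling.le_log_factorial_stirling hN.ne'
  have hlN := Real.log_natCast_nonneg N
  have hpi : 0 ≤ Real.log (2 * Real.pi) := Real.log_nonneg (by linarith [Real.pi_gt_three])
  constructor
  · have : Real.log (N.factorial) ≤ N * M0 N := by
      rw [h1, M0, mul_sum]
      refine sum_le_sum fun d hd => ?_
      have : ((N / d : ℕ) : ℝ) ≤ N / d := Nat.cast_div_le
      have h3 : (0 : ℝ) ≤ Λ d := vonMangoldt_nonneg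
      calc _ ≤ Λ d * (N / d) := by simpa using mul_le_mul_of_nonneg_left this h3
        _ = _ := by ring
    have : N * (Real.log N - 1) ≤ N * M0 N := by linarith
    exact le_of_mul_le_mul_left this hN'
  · have : N * M0 N - 6 * N ≤ Real.log (N.factorial) := by
      have h2 := psi_le N
      suffices N * M0 N - ∑ d ∈ Ioc 0 N, Λ d ≤ Real.log (N.factorial) by linarith
      rw [h1, M0, mul_sum, ← sum_sub_distrib]
      refine sum_le_sum fun d hd => ?_
      simp only [mem_Ioc] at hd
      have hd' : (0 : ℝ) < d := by exact_mod_cast hd.1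
      have hlt : (N : ℝ) / d ≤ ((N / d : ℕ) : ℝ) + 1 := by
        have := Nat.lt_mul_div_succ N hd.1
        rw [div_le_iff₀ hd']
        have h2 : (N : ℝ) < d * (((N / d : ℕ) : ℝ) + 1) := by exact_mod_cast this
        linarith
      have h3 : (0 : ℝ) ≤ Λ d := vonMangoldt_nonneg
      have e : (N : ℝ) * (1 / d * Λ d) = Λ d * (N / d) := by ring
      rw [e]
      have := mul_le_mul_of_nonneg_left hlt h3
      simp only [Nat.sub_zero]
      linarith
    have : N * M0 N ≤ N * (Real.log N + 6) := by linarith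
    exact le_of_mul_le_mul_left this hN'

end P1Count

namespace P1Count
open Finset ArithmeticFunction
open scoped ArithmeticFunction.zeta

noncomputable def theta1 (N : ℕ) : ℝ :=
  ∑ p ∈ Ioc 0 N, if p.Prime ∧ p % 4 = 1 then Real.log p else 0

lemma pointwise_bound (n : ℕ) : (1 + chi n) * Λ n ≤
    2 * (if n.Prime ∧ n % 4 = 1 then Real.log n else 0) + 2 * (if ¬ n.Prime then Λ n else 0)
      + (if n = 2 then 1 else 0) := by
  have h0 : (0 : ℝ) ≤ Λ n := vonMangoldt_nonneg
  by_cases hp : n.Prime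
  · rw [vonMangoldt_apply_prime hp] at *
    rcases hp.eq_two_or_odd with rfl | ho
    · simp [chi, Nat.prime_two]
      linarith [Real.log_two_lt_d9]
    · have h2 : n ≠ 2 := by rintro rfl; simp at ho
      have : n % 4 = 1 ∨ n % 4 = 3 := by omega
      rcases this with h | h
      · simp [chi, h, hp, h2]; linarith
      · simp [chi, h, hp, h2]
  · have h1 : n ≠ 2 := by rintro rfl; exact hp Nat.prime_two
    have := (abs_le.1 (chi_abs n)).2
    simp [hp, h1]
    nlinarith

theorem theta1_lower : ∃ c : ℝ, 0 < c ∧ ∃ N0 : ℕ, ∀ N : ℕ, N0 ≤ N → c * N ≤ theta1 N := by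
  obtain ⟨C, hC⟩ := Chebyshev.psi_sub_theta_le_mul_sqrt
  set K : ℕ := ⌈Real.exp 36⌉₊ with hK
  have hKe : Real.exp 36 ≤ K := Nat.le_ceil _
  have hK0 : (0 : ℝ) < K := lt_of_lt_of_le (Real.exp_pos _) hKe
  have hK0' : 0 < K := by exact_mod_cast hK0
  have hlK : 36 ≤ Real.log K := by
    rw [Real.le_log_iff_exp_le hK0]; exact hKe
  set C' : ℝ := max C 0 with hC'
  have hC'0 : 0 ≤ C' := le_max_right _ _
  refine ⟨1 / (4 * K), by positivity, max K ⌈(4 * K * (C' + 1)) ^ 2⌉₊, fun N hN => ?_⟩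
  have hNK : K ≤ N := le_trans (le_max_left _ _) hN
  have hN2 : (4 * K * (C' + 1)) ^ 2 ≤ (N : ℝ) :=
    (Nat.le_ceil _).trans (by exact_mod_cast le_trans (le_max_right _ _) hN)
  have hN0 : 0 < N := by omega
  have hNr : (0 : ℝ) < N := by exact_mod_cast hN0
  have hN' : 0 < N / K := Nat.div_pos hNK hK0'
  have hN'r : (0 : ℝ) < (N / K : ℕ) := by exact_mod_cast hN'
  have b1 := M0_bounds N hN0
  have b2 := M0_bounds (N / K) hN'
  have b3 := abs_le.1 (Mc_bdd N)
  have b4 := abs_le.1 (Mc_bdd (N / K))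
  have hlog : Real.log (N / K : ℕ) + Real.log K ≤ Real.log N := by
    rw [← Real.log_mul hN'r.ne' hK0.ne']
    apply Real.log_le_log (by positivity)
    exact_mod_cast Nat.div_mul_le_self N K
  have e1 : M0 N + Mc N - (M0 (N / K) + Mc (N / K)) = ∑ n ∈ Ioc (N / K) N, (1 + chi n) * Λ n / n := by
    have (M : ℕ) : M0 M + Mc M = ∑ n ∈ Ioc 0 M, (1 + chi n) * Λ n / n := by
      rw [M0, Mc, ← sum_add_distrib]
      exact sum_congr rfl fun n _ => by ring
    rw [this, this, sub_eq_iff_eq_add', sum_Ioc_consecutive _ (Nat.zero_le _) (Nat.div_le_self _ _)]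
  have hnn (n : ℕ) : 0 ≤ (1 + chi n) * Λ n :=
    mul_nonneg (by linarith [(abs_le.1 (chi_abs n)).1]) vonMangoldt_nonneg
  have e2 : ∑ n ∈ Ioc (N / K) N, (1 + chi n) * Λ n / n ≤ (K / N) * ∑ n ∈ Ioc 0 N, (1 + chi n) * Λ n := by
    rw [mul_sum]
    refine le_trans (sum_le_sum fun n hn => ?_)
      (sum_le_sum_of_subset_of_nonneg (Ioc_subset_Ioc_left (Nat.zero_le _)) fun n _ _ =>
        mul_nonneg (by positivity) (hnn n))
    simp only [mem_Ioc] at hn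
    have h1 : N < n * K := (Nat.div_lt_iff_lt_mul hK0').1 hn.1
    have h2 : (N : ℝ) ≤ n * K := by exact_mod_cast h1.le
    have hn0 : (0 : ℝ) < n := by exact_mod_cast (by omega : 0 < n)
    rw [div_eq_mul_inv, mul_comm]
    refine mul_le_mul_of_nonneg_right ?_ (hnn n)
    rw [inv_eq_one_div, div_le_div_iff₀ hn0 hNr]
    linarith
  have e3 : (1 : ℝ) ≤ (K / N) * ∑ n ∈ Ioc 0 N, (1 + chi n) * Λ n := by linarith
  have e4 : (N : ℝ) / K ≤ ∑ n ∈ Ioc 0 N, (1 + chi n) * Λ n := by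
    rw [div_le_iff₀ hK0]
    rw [div_mul_eq_mul_div, le_div_iff₀ hNr] at e3
    linarith
  have e5 : ∑ n ∈ Ioc 0 N, (1 + chi n) * Λ n ≤ 2 * theta1 N + 2 * (C * Real.sqrt N) + 1 := by
    refine (sum_le_sum fun n _ => pointwise_bound n).trans ?_
    rw [sum_add_distrib, sum_add_distrib, ← mul_sum, ← mul_sum]
    have h1 := Chebyshev.psi_sub_theta_eq_sum_not_prime (N : ℝ)
    rw [Nat.floor_natCast, sum_filter] at h1
    rw [← h1]
    have h2 := hC N
    have h3 : ∑ n ∈ Ioc 0 N, (if n = 2 then (1 : ℝ) else 0) ≤ 1 := by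
      rw [sum_ite_eq']; split_ifs <;> norm_num
    unfold theta1
    linarith
  have hs : 4 * K * (C' + 1) ≤ Real.sqrt N := Real.le_sqrt_of_sq_le hN2
  have hss : Real.sqrt N * Real.sqrt N = N := Real.mul_self_sqrt hNr.le
  have hK1 : (1 : ℝ) ≤ K := by exact_mod_cast hK0'
  have hs1 : 1 ≤ Real.sqrt N := by nlinarith
  have e6 : (C' + 1) * Real.sqrt N ≤ N / (4 * K) := by
    rw [le_div_iff₀ (by positivity)]
    nlinarith
  have e7 : C * Real.sqrt N ≤ C' * Real.sqrt N := by
    gcongr; exact le_max_left _ _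
  have e8 : (N : ℝ) / K = 4 * (N / (4 * K)) := by field_simp
  have e9 : 1 / (4 * K) * (N : ℝ) = N / (4 * K) := by ring
  rw [e9]
  linarith

/-! ### the sum of `1/m` over `⟨P1⟩` -/

open Classical in
noncomputable def f1 : ArithmeticFunction ℝ := ⟨fun n => if InP1 n then 1 else 0, by simp [InP1]⟩
noncomputable def sqA : ArithmeticFunction ℝ := ⟨fun n => if n ≠ 0 ∧ IsSquare n then 1 else 0, by simp⟩
noncomputable def wA : ArithmeticFunction ℝ := ⟨fun n => if n ∣ 2 then 1 else 0, by simp⟩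
noncomputable def chiA : ArithmeticFunction ℝ := ⟨chi, by simp [chi]⟩

lemma f1_apply (n : ℕ) : f1 n = open Classical in if InP1 n then 1 else 0 := rfl
lemma sqA_apply (n : ℕ) : sqA n = if n ≠ 0 ∧ IsSquare n then 1 else 0 := rfl
lemma wA_apply (n : ℕ) : wA n = if n ∣ 2 then 1 else 0 := rfl
lemma chiA_apply (n : ℕ) : chiA n = chi n := rfl

lemma InP1_mul (m n : ℕ) : InP1 (m * n) ↔ InP1 m ∧ InP1 n := by
  unfold InP1
  constructor
  · rintro ⟨h, h'⟩
    exact ⟨⟨Nat.pos_of_mul_pos_right h, fun p hp hd => h' p hp (hd.mul_right _)⟩,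
      ⟨Nat.pos_of_mul_pos_left h, fun p hp hd => h' p hp (hd.mul_left _)⟩⟩
  · rintro ⟨⟨h1, h2⟩, h3, h4⟩
    refine ⟨Nat.mul_pos h1 h3, fun p hp hd => ?_⟩
    rcases (hp.dvd_mul).1 hd with h | h
    · exact h2 p hp h
    · exact h4 p hp h

lemma InP1_one : InP1 1 := ⟨one_pos, fun _ hp hd => absurd (Nat.dvd_one.1 hd) hp.one_lt.ne'⟩

lemma f1_nonneg (n : ℕ) : 0 ≤ f1 n := by rw [f1_apply]; split_ifs <;> norm_num
lemma sqA_nonneg (n : ℕ) : 0 ≤ sqA n := by rw [sqA_apply]; split_ifs <;> norm_num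
lemma wA_nonneg (n : ℕ) : 0 ≤ wA n := by rw [wA_apply]; split_ifs <;> norm_num

lemma f1_mult : f1.IsMultiplicative := by
  refine ⟨by simp [f1_apply, InP1_one], fun {m n} _ => ?_⟩
  have := InP1_mul m n
  simp only [f1_apply]
  by_cases h1 : InP1 m <;> by_cases h2 : InP1 n <;> simp [this, h1, h2]

lemma chiA_mult : chiA.IsMultiplicative :=
  ⟨by simp [chiA_apply, chi], fun {m n} _ => chi_mul m n⟩

lemma wA_mult : wA.IsMultiplicative := by
  refine ⟨by simp [wA_apply], fun {m n} h => ?_⟩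
  have : m * n ∣ 2 ↔ m ∣ 2 ∧ n ∣ 2 :=
    ⟨fun h => ⟨dvd_of_mul_right_dvd h, dvd_of_mul_left_dvd h⟩,
      fun h' => h.mul_dvd_of_dvd_of_dvd h'.1 h'.2⟩
  simp only [wA_apply, this]
  split_ifs <;> simp_all

lemma sqA_mult : sqA.IsMultiplicative := by
  refine ⟨by simp [sqA_apply], fun {m n} h => ?_⟩
  have : (m * n ≠ 0 ∧ IsSquare (m * n)) ↔ (m ≠ 0 ∧ IsSquare m) ∧ (n ≠ 0 ∧ IsSquare n) := by
    constructor
    · rintro ⟨h0, s, hs⟩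
      have hm : IsSquare m := by
        obtain ⟨d, hd⟩ := exists_eq_pow_of_mul_eq_pow (by rw [Nat.isUnit_iff]; exact h) (hs.trans (sq s).symm)
        exact ⟨d, by rw [hd, sq]⟩
      have hn : IsSquare n := by
        obtain ⟨d, hd⟩ := exists_eq_pow_of_mul_eq_pow (a := n) (b := m) (by rw [Nat.isUnit_iff]; exact h.symm)
          ((mul_comm n m).trans (hs.trans (sq s).symm))
        exact ⟨d, by rw [hd, sq]⟩
      exact ⟨⟨left_ne_zero_of_mul h0, hm⟩, right_ne_zero_of_mul h0, hn⟩
    · rintro ⟨⟨h1, h2⟩, h3, h4⟩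
      exact ⟨mul_ne_zero h1 h3, h2.mul h4⟩
  simp only [sqA_apply, this]
  split_ifs <;> simp_all

lemma conv_nonneg {F H : ArithmeticFunction ℝ} (hF : ∀ n, 0 ≤ F n) (hH : ∀ n, 0 ≤ H n) (n : ℕ) :
    0 ≤ (F * H) n := by
  rw [mul_apply]; exact sum_nonneg fun x _ => mul_nonneg (hF _) (hH _)

lemma conv_single {F H : ArithmeticFunction ℝ} (hF : ∀ n, 0 ≤ F n) (hH : ∀ n, 0 ≤ H n) (a b : ℕ)
    (h : a * b ≠ 0) : F a * H b ≤ (F * H) (a * b) := by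
  rw [mul_apply]
  exact single_le_sum (f := fun x : ℕ × ℕ => F x.1 * H x.2)
    (fun x _ => mul_nonneg (hF _) (hH _)) (a := (a, b))
    (Nat.mem_divisorsAntidiagonal.2 ⟨rfl, h⟩)

lemma conv_sum (F H : ArithmeticFunction ℝ) (N : ℕ) :
    ∑ n ∈ Ioc 0 N, (F * H) n / n = ∑ d ∈ Ioc 0 N, F d / d * ∑ e ∈ Ioc 0 (N / d), H e / e := by
  have := sum_antidiag (fun d e => F d / d * (H e / e)) N
  simp only [mul_sum]
  rw [← this]
  refine sum_congr rfl fun n hn => ?_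
  rw [mul_apply, sum_div]
  refine sum_congr rfl fun x hx => ?_
  rw [← (Nat.mem_divisorsAntidiagonal.1 hx).1]
  push_cast
  rw [div_mul_div_comm]

lemma conv_sum_le {F H : ArithmeticFunction ℝ} (hF : ∀ n, 0 ≤ F n) (hH : ∀ n, 0 ≤ H n) (N : ℕ) :
    ∑ n ∈ Ioc 0 N, (F * H) n / n ≤ (∑ n ∈ Ioc 0 N, F n / n) * ∑ n ∈ Ioc 0 N, H n / n := by
  rw [conv_sum, sum_mul]
  refine sum_le_sum fun d hd => mul_le_mul_of_nonneg_left ?_ (div_nonneg (hF _) (by positivity))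
  exact sum_le_sum_of_subset_of_nonneg (Ioc_subset_Ioc_right (Nat.div_le_self _ _))
    fun n _ _ => div_nonneg (hH _) (by positivity)

noncomputable def rA : ArithmeticFunction ℝ := (ζ : ArithmeticFunction ℝ) * chiA
noncomputable def TA : ArithmeticFunction ℝ := (f1 * f1) * (sqA * wA)

lemma rA_mult : rA.IsMultiplicative := (isMultiplicative_zeta.natCast).mul chiA_mult
lemma TA_mult : TA.IsMultiplicative := (f1_mult.mul f1_mult).mul (sqA_mult.mul wA_mult)

lemma chi_pow (p k : ℕ) : chi (p ^ k) = chi p ^ k := by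
  induction k with
  | zero => simp [chi]
  | succ k ih => rw [pow_succ, chi_mul, ih, pow_succ]

lemma TA_nonneg (n : ℕ) : 0 ≤ TA n :=
  conv_nonneg (conv_nonneg f1_nonneg f1_nonneg) (conv_nonneg sqA_nonneg wA_nonneg) n

lemma rA_prime_pow {p : ℕ} (hp : p.Prime) (k : ℕ) :
    0 ≤ rA (p ^ k) ∧ rA (p ^ k) ≤ TA (p ^ k) := by
  have e : rA (p ^ k) = ∑ i ∈ range (k + 1), chi p ^ i := by
    rw [rA, coe_zeta_mul_apply, Nat.sum_divisors_prime_pow hp]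
    exact sum_congr rfl fun i _ => chi_pow p i
  have hpk : p ^ k ≠ 0 := pow_ne_zero _ hp.ne_zero
  have hff1 : (f1 * f1) 1 = 1 := (f1_mult.mul f1_mult).map_one
  have hsw1 : (sqA * wA) 1 = 1 := (sqA_mult.mul wA_mult).map_one
  have T1 : (f1 * f1) (p ^ k) ≤ TA (p ^ k) := by
    have := conv_single (conv_nonneg f1_nonneg f1_nonneg) (conv_nonneg sqA_nonneg wA_nonneg)
      (p ^ k) 1 (by simpa using hpk)
    rwa [hsw1, mul_one, mul_one] at this
  have T2 : (sqA * wA) (p ^ k) ≤ TA (p ^ k) := by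
    have := conv_single (conv_nonneg f1_nonneg f1_nonneg) (conv_nonneg sqA_nonneg wA_nonneg)
      1 (p ^ k) (by simpa using hpk)
    rwa [hff1, one_mul, one_mul] at this
  have T3 (hk : Even k) : 1 ≤ (sqA * wA) (p ^ k) := by
    have := conv_single sqA_nonneg wA_nonneg (p ^ k) 1 (by simpa using hpk)
    rw [mul_one, wA_mult.map_one, mul_one] at this
    refine le_trans (le_of_eq ?_) this
    rw [sqA_apply, if_pos ⟨hpk, hk.isSquare_pow p⟩]
  rw [e]
  rcases hp.eq_two_or_odd with rfl | ho
  · have hc : chi 2 = 0 := by simp [chi]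
    rw [hc, sum_range_succ']
    simp only [pow_succ, mul_zero, sum_const_zero, pow_zero, zero_add]
    refine ⟨zero_le_one, le_trans ?_ T2⟩
    rcases Nat.even_or_odd k with hk | ⟨j, rfl⟩
    · exact T3 hk
    · have := conv_single sqA_nonneg wA_nonneg (2 ^ (2 * j)) 2 (by positivity)
      rw [← pow_succ] at this
      refine le_trans (le_of_eq ?_) this
      rw [sqA_apply, if_pos ⟨by positivity, (even_two_mul j).isSquare_pow 2⟩, wA_apply]
      simp
  · have : p % 4 = 1 ∨ p % 4 = 3 := by omega
    rcases this with h | h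
    · have hc : chi p = 1 := by simp [chi, h]
      rw [hc]
      simp only [one_pow]
      refine ⟨sum_nonneg fun _ _ => zero_le_one, le_trans (le_of_eq ?_) T1⟩
      rw [mul_apply, Nat.sum_divisorsAntidiagonal (fun d e => f1 d * f1 e),
        Nat.sum_divisors_prime_pow hp]
      refine sum_congr rfl fun i hi => ?_
      have hP : InP1 (p ^ k) := by
        refine ⟨Nat.pos_of_ne_zero hpk, fun q hq hd => ?_⟩
        rw [(Nat.prime_dvd_prime_iff_eq hq hp).1 (hq.dvd_of_dvd_pow hd), h]
      have hik : p ^ i ∣ p ^ k := pow_dvd_pow _ (by simp at hi; omega)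
      have := hP
      rw [← Nat.mul_div_cancel' hik, InP1_mul] at this
      simp [f1_apply, this.1, this.2]
    · have hc : chi p = -1 := by simp [chi, h]
      rw [hc, neg_one_geom_sum]
      split_ifs with hk
      · exact ⟨le_rfl, TA_nonneg _⟩
      · refine ⟨zero_le_one, (T3 ?_).trans T2⟩
        rw [Nat.even_add_one] at hk
        simpa using hk

lemma rA_le (n : ℕ) : 0 ≤ rA n ∧ rA n ≤ TA n := by
  induction n using Nat.recOnPosPrimePosCoprime with
  | zero => simp
  | one => simp [rA_mult.map_one, TA_mult.map_one]
  | prime_pow p k hp hk => exact rA_prime_pow hp k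
  | coprime a b ha hb hab h1 h2 =>
    rw [rA_mult.map_mul_of_coprime hab, TA_mult.map_mul_of_coprime hab]
    exact ⟨mul_nonneg h1.1 h2.1, mul_le_mul h1.2 h2.2 h2.1 (TA_nonneg _)⟩

noncomputable def G (N : ℕ) : ℝ := ∑ n ∈ Ioc 0 N, f1 n / n

lemma sum_rA (N : ℕ) : 2 / 3 * Real.log N ≤ ∑ n ∈ Ioc 0 N, rA n / n := by
  rcases Nat.eq_zero_or_pos N with rfl | hN
  · simp
  rw [rA, conv_sum]
  have h1 : Real.log N ≤ ∑ d ∈ Ioc 0 N, (1 : ℝ) / d := by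
    have h := log_add_one_le_harmonic N
    rw [harmonic_eq_sum_Icc] at h
    push_cast at h
    have h2 : Real.log N ≤ Real.log (N + 1) :=
      Real.log_le_log (by exact_mod_cast hN) (by linarith)
    refine (h2.trans h).trans (le_of_eq ?_)
    simp only [one_div]
    rfl
  have h2 : 2 / 3 * ∑ d ∈ Ioc 0 N, (1 : ℝ) / d ≤
      ∑ d ∈ Ioc 0 N, (ζ : ArithmeticFunction ℝ) d / d * ∑ e ∈ Ioc 0 (N / d), chiA e / e := by
    rw [mul_sum]
    refine sum_le_sum fun d hd => ?_
    simp only [mem_Ioc] at hd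
    have h3 := S1_ge (N / d) (Nat.div_pos hd.2 hd.1)
    have h4 : ∑ e ∈ Ioc 0 (N / d), chiA e / e = S1 (N / d) := by
      unfold S1
      exact sum_congr rfl fun e _ => by rw [chiA_apply]; ring
    rw [h4, natCoe_apply, zeta_apply_ne (by omega), Nat.cast_one, mul_comm]
    exact mul_le_mul_of_nonneg_left h3 (by positivity)
  linarith

lemma sum_sqA : ∃ Z : ℝ, 0 < Z ∧ ∀ N, ∑ n ∈ Ioc 0 N, sqA n / n ≤ Z := by
  have hs := Real.summable_one_div_nat_pow.2 (show 1 < 2 by norm_num)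
  refine ⟨∑' n : ℕ, 1 / (n : ℝ) ^ 2 + 1, ?_, fun N => ?_⟩
  · have : 0 ≤ ∑' n : ℕ, 1 / (n : ℝ) ^ 2 := tsum_nonneg fun n => by positivity
    linarith
  · have h1 : ∑ n ∈ Ioc 0 N, sqA n / n ≤ ∑ n ∈ (Ioc 0 N).image (fun s : ℕ => s ^ 2), 1 / (n : ℝ) := by
      have : ∑ n ∈ Ioc 0 N, sqA n / n = ∑ n ∈ (Ioc 0 N).filter (fun n => n ≠ 0 ∧ IsSquare n), 1 / (n : ℝ) := by
        rw [sum_filter]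
        refine sum_congr rfl fun n _ => ?_
        rw [sqA_apply]; split_ifs <;> simp
      rw [this]
      refine sum_le_sum_of_subset_of_nonneg ?_ fun n _ _ => by positivity
      intro n hn
      simp only [mem_filter, mem_Ioc] at hn
      obtain ⟨⟨_, h2⟩, h3, s, rfl⟩ := hn
      refine mem_image.2 ⟨s, mem_Ioc.2 ⟨?_, ?_⟩, sq s⟩
      · rcases Nat.eq_zero_or_pos s with rfl | h
        · simp at h3
        · exact h
      · exact (Nat.le_mul_self s).trans h2
    rw [sum_image (fun a _ b _ h => Nat.pow_left_injective (by norm_num) h)] at h1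
    have h2 := hs.sum_le_tsum (Ioc 0 N) (fun n _ => by positivity)
    push_cast at h1
    linarith

lemma sum_wA (N : ℕ) : ∑ n ∈ Ioc 0 N, wA n / n ≤ 2 := by
  have : ∀ n ∈ Ioc 0 N, wA n / n ≤ (if n = 1 then 1 else 0) + (if n = 2 then (1 : ℝ) else 0) := by
    intro n hn
    rw [wA_apply]
    by_cases h : n ∣ 2
    · rcases (Nat.dvd_prime Nat.prime_two).1 h with rfl | rfl <;> norm_num
    · rw [if_neg h]; simp; positivity
  refine (sum_le_sum this).trans ?_
  rw [sum_add_distrib, sum_ite_eq', sum_ite_eq']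
  split_ifs <;> norm_num

lemma G_nonneg (N : ℕ) : 0 ≤ G N := sum_nonneg fun n _ => div_nonneg (f1_nonneg n) (by positivity)

theorem G_lower : ∃ c : ℝ, 0 < c ∧ ∀ N : ℕ, c * Real.sqrt (Real.log N) ≤ G N := by
  obtain ⟨Z, hZ, hZ'⟩ := sum_sqA
  have key (N : ℕ) : 2 / 3 * Real.log N ≤ G N ^ 2 * (2 * Z) := by
    refine (sum_rA N).trans ?_
    refine (sum_le_sum fun n _ => div_le_div_of_nonneg_right (rA_le n).2 (by positivity)).trans ?_
    refine (conv_sum_le (conv_nonneg f1_nonneg f1_nonneg) (conv_nonneg sqA_nonneg wA_nonneg) N).trans ?_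
    have h1 := conv_sum_le f1_nonneg f1_nonneg N
    have h2 := conv_sum_le sqA_nonneg wA_nonneg N
    have hs0 : 0 ≤ ∑ n ∈ Ioc 0 N, sqA n / n :=
      sum_nonneg fun n _ => div_nonneg (sqA_nonneg n) (by positivity)
    have h3 : (∑ n ∈ Ioc 0 N, sqA n / n) * (∑ n ∈ Ioc 0 N, wA n / n) ≤ 2 * Z := by
      calc _ ≤ (∑ n ∈ Ioc 0 N, sqA n / n) * 2 := mul_le_mul_of_nonneg_left (sum_wA N) hs0
        _ ≤ _ := by linarith [hZ' N]
    refine mul_le_mul (h1.trans (le_of_eq (by rw [G, sq]))) (h2.trans h3) ?_ (sq_nonneg _)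
    exact sum_nonneg fun n _ => div_nonneg (conv_nonneg sqA_nonneg wA_nonneg n) (by positivity)
  refine ⟨Real.sqrt (1 / (3 * Z)), by positivity, fun N => ?_⟩
  rw [← Real.sqrt_mul (by positivity)]
  refine Real.sqrt_le_iff.2 ⟨G_nonneg N, ?_⟩
  have := key N
  rw [div_mul_eq_mul_div, div_le_iff₀ (by positivity)]
  linarith

end P1Count

namespace P1Count
open Finset ArithmeticFunction

open Classical in
noncomputable def GP (P : Finset ℕ) (N : ℕ) : ℝ :=
  ∑ n ∈ Ioc 0 N, if InP1 n ∧ ∀ p ∈ P, ¬ p ∣ n then 1 / (n : ℝ) else 0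

lemma GP_empty (N : ℕ) : GP ∅ N = G N := by
  unfold GP G
  refine sum_congr rfl fun n _ => ?_
  rw [f1_apply]
  by_cases h : InP1 n <;> simp [h]

lemma GP_mono (P : Finset ℕ) {M N : ℕ} (h : M ≤ N) : GP P M ≤ GP P N := by
  classical
  refine sum_le_sum_of_subset_of_nonneg (Ioc_subset_Ioc_right h) fun n _ _ => ?_
  split_ifs <;> positivity

lemma GP_insert (P : Finset ℕ) (p : ℕ) (hp : p.Prime) (N : ℕ) :
    (1 - 1 / (p : ℝ)) * GP P N ≤ GP (insert p P) N := by
  classical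
  have hp0 : (0 : ℝ) < p := by exact_mod_cast hp.pos
  have h1 : GP P N = GP (insert p P) N +
      ∑ n ∈ (Ioc 0 N).filter (fun n => p ∣ n),
        if InP1 n ∧ ∀ q ∈ P, ¬ q ∣ n then 1 / (n : ℝ) else 0 := by
    unfold GP
    rw [sum_filter, ← sum_add_distrib]
    refine sum_congr rfl fun n _ => ?_
    by_cases h : p ∣ n
    · simp [h]
    · simp [h]
  have h2 : ∑ n ∈ (Ioc 0 N).filter (fun n => p ∣ n),
        (if InP1 n ∧ ∀ q ∈ P, ¬ q ∣ n then 1 / (n : ℝ) else 0) ≤ 1 / (p : ℝ) * GP P (N / p) := by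
    have : (Ioc 0 N).filter (fun n => p ∣ n) ⊆ (Ioc 0 (N / p)).image (fun m => p * m) := by
      intro n hn
      simp only [mem_filter, mem_Ioc] at hn
      obtain ⟨⟨h0, hN⟩, m, rfl⟩ := hn
      refine mem_image.2 ⟨m, mem_Ioc.2 ⟨Nat.pos_of_mul_pos_left h0, ?_⟩, rfl⟩
      rw [Nat.le_div_iff_mul_le hp.pos, mul_comm]; exact hN
    refine (sum_le_sum_of_subset_of_nonneg this fun n _ _ => by split_ifs <;> positivity).trans ?_
    rw [sum_image (fun a _ b _ h => Nat.eq_of_mul_eq_mul_left hp.pos h), GP, mul_sum]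
    refine sum_le_sum fun m _ => ?_
    by_cases h : InP1 (p * m) ∧ ∀ q ∈ P, ¬ q ∣ p * m
    · rw [if_pos h, if_pos ⟨((InP1_mul _ _).1 h.1).2, fun q hq hd => h.2 q hq (hd.mul_left _)⟩]
      push_cast
      rw [one_div_mul_one_div]
    · rw [if_neg h]
      split_ifs <;> positivity
  have h3 : 1 / (p : ℝ) * GP P (N / p) ≤ 1 / (p : ℝ) * GP P N :=
    mul_le_mul_of_nonneg_left (GP_mono P (Nat.div_le_self _ _)) (by positivity)
  linarith

lemma GP_lower (P : Finset ℕ) (hP : ∀ p ∈ P, p.Prime) (N : ℕ) :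
    (∏ p ∈ P, (1 - 1 / (p : ℝ))) * G N ≤ GP P N := by
  induction P using Finset.induction_on with
  | empty => simp [GP_empty]
  | insert p P hpP ih =>
    have hp := hP p (mem_insert_self _ _)
    rw [prod_insert hpP, mul_assoc]
    refine le_trans ?_ (GP_insert P p hp N)
    refine mul_le_mul_of_nonneg_left (ih fun q hq => hP q (mem_insert_of_mem hq)) ?_
    have : (1 : ℝ) ≤ p := by exact_mod_cast hp.one_lt.le
    rw [sub_nonneg, div_le_one (by linarith)]
    exact this

open Classical in
noncomputable def fa (a n : ℕ) : ℝ := if InP1 n ∧ n.Coprime a then 1 else 0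

lemma fa_mul (a m n : ℕ) : fa a (m * n) = fa a m * fa a n := by
  have h1 := InP1_mul m n
  have h2 : (m * n).Coprime a ↔ m.Coprime a ∧ n.Coprime a := Nat.coprime_mul_iff_left
  unfold fa
  by_cases k1 : InP1 m ∧ m.Coprime a
  · by_cases k2 : InP1 n ∧ n.Coprime a
    · rw [if_pos k1, if_pos k2, if_pos ⟨h1.2 ⟨k1.1, k2.1⟩, h2.2 ⟨k1.2, k2.2⟩⟩, one_mul]
    · rw [if_neg k2, if_neg fun h => k2 ⟨(h1.1 h.1).2, (h2.1 h.2).2⟩, mul_zero]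
  · rw [if_neg k1, if_neg fun h => k1 ⟨(h1.1 h.1).1, (h2.1 h.2).1⟩, zero_mul]

lemma fa_nonneg (a n : ℕ) : 0 ≤ fa a n := by unfold fa; split_ifs <;> norm_num

lemma fa_sum_lower (a : ℕ) (ha : 0 < a) (N : ℕ) :
    (∏ p ∈ a.primeFactors.filter (fun p => p % 4 = 1), (1 - 1 / (p : ℝ))) * G N ≤
      ∑ n ∈ Ioc 0 N, fa a n / n := by
  refine (GP_lower _ (fun p hp => Nat.prime_of_mem_primeFactors (mem_filter.1 hp).1) N).trans ?_
  unfold GP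
  refine sum_le_sum fun n hn => ?_
  by_cases h : InP1 n ∧ ∀ p ∈ a.primeFactors.filter (fun p => p % 4 = 1), ¬ p ∣ n
  · rw [if_pos h]
    have : n.Coprime a := by
      refine Nat.Coprime.symm (Nat.coprime_of_dvd fun p hp hpa hpn => ?_)
      refine h.2 p (mem_filter.2 ⟨Nat.mem_primeFactors.2 ⟨hp, hpa, ha.ne'⟩, h.1.2 p hp hpn⟩) hpn
    rw [fa, if_pos ⟨h.1, this⟩]
  · rw [if_neg h]
    exact div_nonneg (fa_nonneg _ _) (by positivity)

lemma theta_a_lower (a : ℕ) (ha : 0 < a) (y : ℕ) :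
    theta1 y - a ≤ ∑ d ∈ Ioc 0 y, fa a d * Λ d := by
  have h1 : ∑ d ∈ Ioc 0 y, (if d ∈ a.primeFactors then Real.log d else 0) ≤ a := by
    calc _ = ∑ d ∈ (Ioc 0 y).filter (· ∈ a.primeFactors), Real.log d := by rw [sum_filter]
      _ ≤ ∑ d ∈ a.primeFactors, Real.log d :=
        sum_le_sum_of_subset_of_nonneg (fun d hd => (mem_filter.1 hd).2)
          fun d _ _ => Real.log_natCast_nonneg d
      _ = Real.log ((∏ p ∈ a.primeFactors, p : ℕ) : ℝ) := by
        rw [Nat.cast_prod, Real.log_prod]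
        intro p hp
        exact_mod_cast (Nat.prime_of_mem_primeFactors hp).ne_zero
      _ ≤ Real.log a := by
        apply Real.log_le_log
        · exact_mod_cast Finset.prod_pos fun p hp => (Nat.prime_of_mem_primeFactors hp).pos
        · exact_mod_cast Nat.le_of_dvd ha (Nat.prod_primeFactors_dvd a)
      _ ≤ a := (Real.log_le_self (by positivity))
  have h2 : theta1 y - ∑ d ∈ Ioc 0 y, (if d ∈ a.primeFactors then Real.log d else 0)
      ≤ ∑ d ∈ Ioc 0 y, fa a d * Λ d := by
    rw [theta1, ← sum_sub_distrib]
    refine sum_le_sum fun d _ => ?_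
    have h0 : 0 ≤ fa a d * Λ d := mul_nonneg (fa_nonneg _ _) vonMangoldt_nonneg
    have hl := Real.log_natCast_nonneg d
    by_cases h : d.Prime ∧ d % 4 = 1
    · by_cases h' : d ∣ a
      · have : d ∈ a.primeFactors := Nat.mem_primeFactors.2 ⟨h.1, h', ha.ne'⟩
        simp only [h, this, and_self, if_true]
        simpa using h0
      · have k : d ∉ a.primeFactors := fun hm => h' (Nat.dvd_of_mem_primeFactors hm)
        have k1 : InP1 d := ⟨h.1.pos, fun q hq hd => by
          rw [(Nat.prime_dvd_prime_iff_eq hq h.1).1 hd, h.2]⟩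
        rw [if_pos h, if_neg k, fa, if_pos ⟨k1, (Nat.Prime.coprime_iff_not_dvd h.1).2 h'⟩,
          vonMangoldt_apply_prime h.1]
        simp
    · rw [if_neg h]
      split_ifs <;> linarith
  linarith

lemma main_ineq (c1 : ℝ) (hc1 : 0 < c1) (N1 : ℕ) (H1 : ∀ N : ℕ, N1 ≤ N → c1 * N ≤ theta1 N)
    (N s a : ℕ) (ha : 0 < a) (hs1 : 1 ≤ s) (hsN : s * s ≤ N) (hs : N1 ≤ s)
    (has : (a : ℝ) ≤ c1 / 2 * s) :
    c1 / 4 * N * ∑ n ∈ Ioc 0 s, fa a n / n ≤ (∑ n ∈ Ioc 0 N, fa a n) * Real.log N := by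
  have hsN' : s ≤ N := (Nat.le_mul_self s).trans hsN
  calc _ ≤ ∑ e ∈ Ioc 0 s, fa a e * ∑ d ∈ Ioc 0 (N / e), fa a d * Λ d := by
        rw [mul_sum]
        refine sum_le_sum fun e he => ?_
        simp only [mem_Ioc] at he
        have he' : (0 : ℝ) < e := by exact_mod_cast he.1
        have hy : s ≤ N / e := by
          rw [Nat.le_div_iff_mul_le he.1]
          exact (Nat.mul_le_mul_left s he.2).trans hsN
        have h1 := theta_a_lower a ha (N / e)
        have h2 := H1 (N / e) (hs.trans hy)
        have hyr : (s : ℝ) ≤ (N / e : ℕ) := by exact_mod_cast hy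
        have hy1 : (1 : ℝ) ≤ (N / e : ℕ) := by exact_mod_cast hs1.trans hy
        have hlt : (N : ℝ) / e ≤ ((N / e : ℕ) : ℝ) + 1 := by
          have := Nat.lt_mul_div_succ N he.1
          rw [div_le_iff₀ he']
          have h2 : (N : ℝ) < e * (((N / e : ℕ) : ℝ) + 1) := by exact_mod_cast this
          linarith
        have e1 : c1 / 4 * N * (fa a e / e) = fa a e * (c1 / 4 * (N / e)) := by ring
        rw [e1]
        refine mul_le_mul_of_nonneg_left ?_ (fa_nonneg _ _)
        refine le_trans ?_ h1
        nlinarith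
    _ ≤ ∑ e ∈ Ioc 0 N, fa a e * ∑ d ∈ Ioc 0 (N / e), fa a d * Λ d := by
        refine sum_le_sum_of_subset_of_nonneg (Ioc_subset_Ioc_right hsN') fun e _ _ => ?_
        exact mul_nonneg (fa_nonneg _ _)
          (sum_nonneg fun d _ => mul_nonneg (fa_nonneg _ _) vonMangoldt_nonneg)
    _ = ∑ n ∈ Ioc 0 N, fa a n * Real.log n := by
        rw [log_conv (fa a) (fa_mul a) N]
        have k1 := sum_antidiag (fun e d => fa a e * (fa a d * Λ d)) N
        have k2 := sum_antidiag (fun d e => fa a d * Λ d * fa a e) N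
        simp only [mul_sum]
        rw [← k1, ← k2]
        refine sum_congr rfl fun n _ => ?_
        conv_lhs => rw [← Nat.map_swap_divisorsAntidiagonal, sum_map]
        refine sum_congr rfl fun x _ => ?_
        simp
        ring
    _ ≤ _ := by
        rw [sum_mul]
        refine sum_le_sum fun n hn => mul_le_mul_of_nonneg_left ?_ (fa_nonneg _ _)
        simp only [mem_Ioc] at hn
        apply Real.log_le_log <;> norm_cast <;> omega

lemma ncard_eq (t : ℝ) (a : ℕ) :
    (({m : ℕ | (m : ℝ) < t ∧ InP1 m ∧ Nat.Coprime m a}).ncard : ℝ) =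
      ∑ n ∈ Ioc 0 (⌈t⌉₊ - 1), fa a n := by
  classical
  have : {m : ℕ | (m : ℝ) < t ∧ InP1 m ∧ Nat.Coprime m a} =
      ((Ioc 0 (⌈t⌉₊ - 1)).filter (fun m => InP1 m ∧ m.Coprime a) : Finset ℕ) := by
    ext m
    simp only [Set.mem_ofPred_eq, coe_filter, mem_Ioc]
    rw [← Nat.lt_ceil]
    constructor
    · rintro ⟨h1, h2, h3⟩; exact ⟨⟨h2.1, by omega⟩, h2, h3⟩
    · rintro ⟨⟨h0, h1⟩, h2, h3⟩; exact ⟨by omega, h2, h3⟩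
  rw [this, Set.ncard_coe_finset, card_filter]
  push_cast
  exact sum_congr rfl fun n _ => by unfold fa; split_ifs <;> rfl

end P1Count

open P1Count in
theorem count_of_P1_integers_coprime_to_a :
    ∀ C : ℝ, 0 < C → ∃ c : ℝ, 0 < c ∧ ∃ t0 : ℝ, ∀ t : ℝ, t0 ≤ t →
      ∀ a : ℕ, 0 < a → (a : ℝ) ≤ Real.log t ^ C →
        c * t * Real.log t ^ (-(1 : ℝ) / 2) *
            ∏ p ∈ a.primeFactors.filter (fun p => p % 4 = 1), (1 - 1 / (p : ℝ)) ≤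
          (({m : ℕ | (m : ℝ) < t ∧ InP1 m ∧ Nat.Coprime m a}).ncard : ℝ) := by
  intro C _
  obtain ⟨c1, hc1, N1, H1⟩ := theta1_lower
  obtain ⟨c2, hc2, H2⟩ := G_lower
  have hlit := (isLittleO_log_rpow_rpow_atTop C (show (0 : ℝ) < 1 / 2 by norm_num)).bound
    (show 0 < c1 / 6 by positivity)
  obtain ⟨t1, ht1⟩ := Filter.eventually_atTop.1 hlit
  refine ⟨c1 * c2 / 16, by positivity, max t1 ((3 * (N1 + 8)) ^ 2), fun t ht a ha hat => ?_⟩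
  rw [ncard_eq]
  have hb := ht1 t ((le_max_left _ _).trans ht)
  have ht2 : (3 * ((N1 : ℝ) + 8)) ^ 2 ≤ t := (le_max_right _ _).trans ht
  have hN1 : (0 : ℝ) ≤ N1 := Nat.cast_nonneg _
  have ht3 : 576 ≤ t := by nlinarith
  have ht0 : 0 < t := by linarith
  have hlt : 0 < Real.log t := Real.log_pos (by linarith)
  rw [← Real.sqrt_eq_rpow, Real.norm_of_nonneg (Real.sqrt_nonneg t),
    Real.norm_of_nonneg (Real.rpow_nonneg hlt.le _)] at hb
  set N : ℕ := ⌈t⌉₊ - 1 with hN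
  set s : ℕ := Nat.sqrt N with hs
  have hc0 : 1 ≤ ⌈t⌉₊ := Nat.one_le_ceil_iff.2 ht0
  have hNc : (N : ℝ) = ⌈t⌉₊ - 1 := by rw [hN, Nat.cast_sub hc0, Nat.cast_one]
  have hNt : (N : ℝ) < t := by
    have := Nat.ceil_lt_add_one ht0.le
    linarith
  have hNt' : t - 1 ≤ N := by
    have := Nat.le_ceil t
    linarith
  have hsN : s * s ≤ N := Nat.sqrt_le N
  have hsN2 : N < (s + 1) * (s + 1) := Nat.lt_succ_sqrt N
  have hsN2' : (N : ℝ) < ((s : ℝ) + 1) * (s + 1) := by exact_mod_cast hsN2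
  have hst : Real.sqrt t ≤ s + 2 := by
    apply Real.sqrt_le_iff.2
    constructor
    · positivity
    · nlinarith [Nat.cast_nonneg (α := ℝ) s]
  have hq : 3 * ((N1 : ℝ) + 8) ≤ Real.sqrt t := Real.le_sqrt_of_sq_le ht2
  have hs3 : Real.sqrt t ≤ 3 * s := by linarith
  have hsr : (N1 : ℝ) + 8 ≤ s := by linarith
  have hs8 : N1 + 8 ≤ s := by exact_mod_cast hsr
  have has : (a : ℝ) ≤ c1 / 2 * s := by
    calc (a : ℝ) ≤ c1 / 6 * Real.sqrt t := hat.trans hb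
      _ ≤ c1 / 6 * (3 * s) := by gcongr
      _ = _ := by ring
  have key := main_ineq c1 hc1 N1 H1 N s a ha (by omega) hsN (by omega) has
  have k2 := fa_sum_lower a ha s
  set Q := ∏ p ∈ a.primeFactors.filter (fun p => p % 4 = 1), (1 - 1 / (p : ℝ)) with hQ
  have hQ0 : 0 ≤ Q := by
    refine Finset.prod_nonneg fun p hp => ?_
    have hp' := Nat.prime_of_mem_primeFactors (Finset.mem_filter.1 hp).1
    have : (1 : ℝ) ≤ p := by exact_mod_cast hp'.one_lt.le
    rw [sub_nonneg, div_le_one (by linarith)]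
    exact this
  have hls : Real.log t / 4 ≤ Real.log s := by
    have h1 : t ≤ (s : ℝ) ^ 4 := by
      have : t ≤ (3 * (s : ℝ)) ^ 2 := by
        rw [← Real.sq_sqrt ht0.le]; gcongr
      have h9 : (9 : ℝ) ≤ (s : ℝ) ^ 2 := by nlinarith
      nlinarith [sq_nonneg (s : ℝ)]
    have h2 := Real.log_le_log ht0 h1
    rw [Real.log_pow] at h2
    push_cast at h2
    linarith
  have hsq : Real.sqrt (Real.log t) / 2 ≤ Real.sqrt (Real.log s) := by
    apply Real.le_sqrt_of_sq_le
    rw [div_pow, Real.sq_sqrt hlt.le]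
    linarith
  have k3 : c2 * (Real.sqrt (Real.log t) / 2) ≤ G s :=
    (mul_le_mul_of_nonneg_left hsq hc2.le).trans (H2 s)
  have k4 : Q * (c2 * (Real.sqrt (Real.log t) / 2)) ≤ ∑ n ∈ Finset.Ioc 0 s, fa a n / n :=
    (mul_le_mul_of_nonneg_left k3 hQ0).trans k2
  set S := ∑ n ∈ Finset.Ioc 0 N, fa a n with hS
  have hS0 : 0 ≤ S := Finset.sum_nonneg fun n _ => fa_nonneg a n
  have hN0 : (0 : ℝ) < N := by linarith
  have hlN : Real.log N ≤ Real.log t := Real.log_le_log hN0 hNt.le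
  have k5 : c1 / 4 * (t / 2) * (Q * (c2 * (Real.sqrt (Real.log t) / 2))) ≤ S * Real.log t := by
    calc _ ≤ c1 / 4 * N * ∑ n ∈ Finset.Ioc 0 s, fa a n / n := by
          apply mul_le_mul _ k4 (by positivity) (by positivity)
          gcongr
          linarith
      _ ≤ S * Real.log N := key
      _ ≤ _ := by gcongr
  have hr : Real.log t ^ (-(1 : ℝ) / 2) = (Real.sqrt (Real.log t))⁻¹ := by
    rw [neg_div, Real.rpow_neg hlt.le, Real.sqrt_eq_rpow]
  rw [hr]
  have hq0 : 0 < Real.sqrt (Real.log t) := Real.sqrt_pos.2 hlt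
  have hqq : Real.sqrt (Real.log t) * Real.sqrt (Real.log t) = Real.log t :=
    Real.mul_self_sqrt hlt.le
  have k6 : c1 * c2 / 16 * t * Q ≤ S * Real.sqrt (Real.log t) := by
    refine le_of_mul_le_mul_right ?_ hq0
    calc _ = c1 / 4 * (t / 2) * (Q * (c2 * (Real.sqrt (Real.log t) / 2))) := by
          ring
      _ ≤ _ := by rw [mul_assoc S, hqq]; exact k5
  calc _ = (c1 * c2 / 16 * t * Q) / Real.sqrt (Real.log t) := by
        rw [div_eq_mul_inv]; ring
    _ ≤ S := by rwa [div_le_iff₀ hq0]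
end

section
/- There exists an absolute constant C > 0 such that for every prime p0 and every integer k ≥ 2, if h_1 < h_2 < … < h_k are the k smallest positive integers lying in ⟨P1⟩ and coprime to p0, then h_k ≤ C · k · (log k)^{1/2}. -/
namespace PP
open Finset ArithmeticFunction

noncomputable def ch (n : ℕ) : ℝ := if n % 4 = 1 then 1 else if n % 4 = 3 then -1 else 0

lemma ch_mul (m n : ℕ) : ch (m * n) = ch m * ch n := by
  unfold ch
  rw [Nat.mul_mod]
  have h1 : m % 4 < 4 := Nat.mod_lt _ (by norm_num)
  have h2 : n % 4 < 4 := Nat.mod_lt _ (by norm_num)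
  generalize m % 4 = a at *
  generalize n % 4 = b at *
  interval_cases a <;> interval_cases b <;> norm_num

lemma ch_one : ch 1 = 1 := by norm_num [ch]

lemma ch_pow (p k : ℕ) : ch (p ^ k) = ch p ^ k := by
  induction k with
  | zero => simp [ch_one]
  | succ k ih => rw [pow_succ, ch_mul, ih, pow_succ]

lemma abs_ch_le (n : ℕ) : |ch n| ≤ 1 := by
  unfold ch; split_ifs <;> norm_num

/-- alternating sum bound -/
lemma alt_aux (f : ℕ → ℝ) (a0 : ℕ) (hf0 : ∀ n, a0 ≤ n → 0 ≤ f n)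
    (hf : ∀ n, a0 ≤ n → f (n + 1) ≤ f n) (d : ℕ) : ∀ a, a0 ≤ a →
    ((a % 4 = 0 ∨ a % 4 = 1) → 0 ≤ ∑ i ∈ range d, ch (a + i) * f (a + i) ∧
      ∑ i ∈ range d, ch (a + i) * f (a + i) ≤ f a) ∧
    ((a % 4 = 2 ∨ a % 4 = 3) → -f a ≤ ∑ i ∈ range d, ch (a + i) * f (a + i) ∧
      ∑ i ∈ range d, ch (a + i) * f (a + i) ≤ 0) := by
  induction d with
  | zero => intro a ha; have := hf0 a ha; simp [this]
  | succ d ih =>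
    intro a ha
    have h0 := hf0 a ha
    have h1 := hf a ha
    obtain ⟨i1, i2⟩ := ih (a + 1) (by omega)
    have e : ∑ i ∈ range (d + 1), ch (a + i) * f (a + i)
      = ch a * f a + ∑ i ∈ range d, ch (a + 1 + i) * f (a + 1 + i) := by
      rw [sum_range_succ', add_comm]
      simp only [add_zero]
      congr 1
      refine sum_congr rfl fun i _ => ?_
      rw [show a + (i + 1) = a + 1 + i by ring]
    rw [e]
    have hc : ch a = if a % 4 = 1 then 1 else if a % 4 = 3 then -1 else 0 := rfl
    constructor
    · rintro (h | h)
      · have := i1 (by omega)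
        rw [hc]; simp [h]
        constructor <;> linarith
      · have := i2 (by omega)
        rw [hc]; simp [h]
        constructor <;> linarith
    · rintro (h | h)
      · have := i2 (by omega)
        rw [hc]; simp [h]
        constructor <;> linarith
      · have := i1 (by omega)
        rw [hc]; simp [h]
        constructor <;> linarith

lemma alt_abs (f : ℕ → ℝ) (a0 : ℕ) (hf0 : ∀ n, a0 ≤ n → 0 ≤ f n)
    (hf : ∀ n, a0 ≤ n → f (n + 1) ≤ f n) (a b : ℕ) (ha : a0 ≤ a + 1) :
    |∑ n ∈ Ioc a b, ch n * f n| ≤ f (a + 1) := by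
  have e : ∑ n ∈ Ioc a b, ch n * f n = ∑ i ∈ range (b - a), ch (a + 1 + i) * f (a + 1 + i) := by
    rw [show Ioc a b = Ico (a + 1) (b + 1) by ext; simp only [mem_Ioc, mem_Ico]; omega, sum_Ico_eq_sum_range]
    rw [Nat.add_sub_add_right]
  rw [e]
  have h := alt_aux f a0 hf0 hf (b - a) (a + 1) ha
  have h0 := hf0 _ ha
  rw [abs_le]
  have hm : (a + 1) % 4 < 4 := Nat.mod_lt _ (by norm_num)
  by_cases hh : (a + 1) % 4 = 0 ∨ (a + 1) % 4 = 1
  · have := h.1 hh; constructor <;> linarith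
  · have := h.2 (by omega); constructor <;> linarith

/-- partial sums of L(1, χ) -/
noncomputable def B (N : ℕ) : ℝ := ∑ n ∈ Ioc 0 N, ch n / n

lemma B_sub (a b : ℕ) (h : a ≤ b) : |B b - B a| ≤ 1 / ((a : ℝ) + 1) := by
  have e : B b - B a = ∑ n ∈ Ioc a b, ch n * (1 / (n : ℝ)) := by
    unfold B
    rw [← sum_Ioc_consecutive (fun n : ℕ => ch n / (n : ℝ)) (Nat.zero_le a) h]
    rw [add_sub_cancel_left]
    refine sum_congr rfl fun i _ => by ring
  rw [e]
  have := alt_abs (fun n => 1 / (n : ℝ)) 1 (fun n _ => by positivity) (fun n hn => by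
    have : (0 : ℝ) < n := by exact_mod_cast hn
    push_cast
    exact one_div_le_one_div_of_le this (by linarith)) a b (by omega)
  simpa using this

lemma B_ge (N : ℕ) (h : 1 ≤ N) : 2 / 3 ≤ B N := by
  by_cases h3 : N < 3
  · interval_cases N
    · norm_num [B, ch]
    · norm_num [B, ch, sum_Ioc_succ_top]
  · have e : B 3 = 2 / 3 := by norm_num [B, ch, sum_Ioc_succ_top]
    have e : B N - B 4 = ∑ i ∈ range (N - 4), ch (5 + i) * (1 / ((5 + i : ℕ) : ℝ)) ∨ N = 3 := by
      by_cases h4 : N = 3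
      · right; exact h4
      left
      unfold B
      rw [← sum_Ioc_consecutive (fun n : ℕ => ch n / (n : ℝ)) (Nat.zero_le 4) (by omega : 4 ≤ N)]
      rw [add_sub_cancel_left, show Ioc 4 N = Ico (4 + 1) (N + 1) by ext; simp; omega,
        sum_Ico_eq_sum_range]
      rw [show N + 1 - (4 + 1) = N - 4 by omega]
      refine sum_congr rfl fun i _ => by ring
    have e4 : B 4 = 2 / 3 := by norm_num [B, ch, sum_Ioc_succ_top]
    rcases e with e | e
    · have := ((alt_aux (fun n => 1 / (n : ℝ)) 1 (fun n _ => by positivity) (fun n hn => by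
        have : (0 : ℝ) < n := by exact_mod_cast hn
        push_cast
        exact one_div_le_one_div_of_le this (by linarith)) (N - 4) 5 (by omega)).1 (by norm_num)).1
      linarith
    · subst e; linarith

/-- weight by 1/n -/
noncomputable def w (f : ArithmeticFunction ℝ) : ArithmeticFunction ℝ := ⟨fun n => f n / n, by simp⟩

lemma w_apply (f : ArithmeticFunction ℝ) (n : ℕ) : w f n = f n / n := rfl

lemma w_mul (f g : ArithmeticFunction ℝ) : w (f * g) = w f * w g := by
  ext n
  rw [w_apply, mul_apply, mul_apply, sum_div]
  refine sum_congr rfl fun x hx => ?_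
  rw [Nat.mem_divisorsAntidiagonal] at hx
  rw [w_apply, w_apply, ← hx.1]
  push_cast
  rw [mul_div_mul_comm]

lemma sum_w_mul (f g : ArithmeticFunction ℝ) (N : ℕ) :
    ∑ n ∈ Ioc 0 N, (f * g) n / n =
      ∑ n ∈ Ioc 0 N, f n / n * ∑ m ∈ Ioc 0 (N / n), g m / m := by
  have := sum_Ioc_mul_eq_sum_sum (w f) (w g) N
  rw [← w_mul] at this
  exact this

lemma sum_w_le (f g : ArithmeticFunction ℝ) (hf : ∀ n, 0 ≤ f n) (hg : ∀ n, 0 ≤ g n) (N : ℕ) :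
    ∑ n ∈ Ioc 0 N, (f * g) n / n ≤ (∑ n ∈ Ioc 0 N, f n / n) * ∑ m ∈ Ioc 0 N, g m / m := by
  rw [sum_w_mul, sum_mul]
  refine sum_le_sum fun n hn => ?_
  refine mul_le_mul_of_nonneg_left ?_ (div_nonneg (hf n) (Nat.cast_nonneg n))
  refine sum_le_sum_of_subset_of_nonneg ?_ fun m _ _ => div_nonneg (hg m) (Nat.cast_nonneg m)
  exact Ioc_subset_Ioc_right (Nat.div_le_self _ _)

noncomputable def X : ArithmeticFunction ℝ := ⟨ch, by norm_num [ch]⟩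
noncomputable def X2 : ArithmeticFunction ℝ := ⟨fun n => ch n ^ 2, by norm_num [ch]⟩

open Classical in
noncomputable def IP : ArithmeticFunction ℝ := ⟨fun n => if InP1 n then 1 else 0, by simp [InP1]⟩
open Classical in
noncomputable def IS : ArithmeticFunction ℝ :=
  ⟨fun n => if n ≠ 0 ∧ IsSquare n then 1 else 0, by simp⟩

lemma X_mult : X.IsMultiplicative := ⟨ch_one, fun {m n} _ => ch_mul m n⟩
lemma X2_mult : X2.IsMultiplicative := ⟨by simp [X2, ch_one], fun {m n} _ => by
  simp [X2, ch_mul, mul_pow]⟩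

lemma InP1_mul (m n : ℕ) : InP1 (m * n) ↔ InP1 m ∧ InP1 n := by
  unfold InP1
  constructor
  · rintro ⟨h, h'⟩
    refine ⟨⟨Nat.pos_of_mul_pos_right h, fun p hp hd => h' p hp (hd.mul_right n)⟩,
     ⟨Nat.pos_of_mul_pos_left h, fun p hp hd => h' p hp (hd.mul_left m)⟩⟩
  · rintro ⟨⟨h, h'⟩, g, g'⟩
    refine ⟨Nat.mul_pos h g, fun p hp hd => ?_⟩
    rcases (Nat.Prime.dvd_mul hp).1 hd with h1 | h1
    · exact h' p hp h1
    · exact g' p hp h1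

lemma InP1_one : InP1 1 := ⟨one_pos, fun p hp hd => by
  rw [Nat.dvd_one] at hd; exact absurd hd hp.ne_one⟩

lemma InP1_prime {p : ℕ} (hp : p.Prime) (h : p % 4 = 1) : InP1 p := ⟨hp.pos, fun q hq hd => by
  rw [(Nat.prime_dvd_prime_iff_eq hq hp).1 hd]; exact h⟩

lemma InP1_dvd {m n : ℕ} (h : InP1 n) (hd : m ∣ n) : InP1 m := by
  obtain ⟨k, rfl⟩ := hd
  exact ((InP1_mul m k).1 h).1

lemma InP1_pow {p : ℕ} (hp : InP1 p) (k : ℕ) : InP1 (p ^ k) := by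
  induction k with
  | zero => exact InP1_one
  | succ k ih => rw [pow_succ, InP1_mul]; exact ⟨ih, hp⟩

lemma IP_mult : IP.IsMultiplicative := ⟨by simp [IP, InP1_one], fun {m n} _ => by
  simp only [IP, coe_mk]
  by_cases h : InP1 m <;> by_cases h' : InP1 n <;> simp [h, h', InP1_mul]⟩

lemma IS_mult : IS.IsMultiplicative := ⟨by simp [IS], fun {m n} h => by
  have : (m * n ≠ 0 ∧ IsSquare (m * n)) ↔ (m ≠ 0 ∧ IsSquare m) ∧ (n ≠ 0 ∧ IsSquare n) := by
    constructor
    · rintro ⟨h0, c, hc⟩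
      have h1 : IsSquare m := by
        obtain ⟨d, hd⟩ := exists_eq_pow_of_mul_eq_pow (Nat.isUnit_iff.2 h) (hc.trans (sq c).symm)
        exact ⟨d, by rw [hd, sq]⟩
      have h2 : IsSquare n := by
        obtain ⟨d, hd⟩ := exists_eq_pow_of_mul_eq_pow (Nat.isUnit_iff.2 h.symm)
          ((mul_comm n m).trans (hc.trans (sq c).symm))
        exact ⟨d, by rw [hd, sq]⟩
      exact ⟨⟨left_ne_zero_of_mul h0, h1⟩, ⟨right_ne_zero_of_mul h0, h2⟩⟩
    · rintro ⟨⟨h0, h1⟩, h2, h3⟩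
      exact ⟨mul_ne_zero h0 h2, h1.mul h3⟩
  simp only [IS, coe_mk, this]
  by_cases h : (m ≠ 0 ∧ IsSquare m) <;> by_cases h' : (n ≠ 0 ∧ IsSquare n) <;> simp [h, h']⟩

lemma IP_nonneg (n : ℕ) : 0 ≤ IP n := by
  simp only [IP, coe_mk]; split_ifs <;> norm_num
lemma IS_nonneg (n : ℕ) : 0 ≤ IS n := by
  simp only [IS, coe_mk]; split_ifs <;> norm_num
lemma mul_nonneg' (f g : ArithmeticFunction ℝ) (hf : ∀ n, 0 ≤ f n) (hg : ∀ n, 0 ≤ g n) (n : ℕ) :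
    0 ≤ (f * g) n := by
  rw [mul_apply]; exact sum_nonneg fun x _ => mul_nonneg (hf _) (hg _)

lemma prime_pow_le (p k : ℕ) (hp : p.Prime) :
    0 ≤ (X2 * X) (p ^ k) ∧ (X2 * X) (p ^ k) ≤ (IS * (IP * IP)) (p ^ k) := by
  have hPP := mul_nonneg' IP IP IP_nonneg IP_nonneg
  have hG := mul_nonneg' IS (IP * IP) IS_nonneg hPP
  have hpk : p ^ k ≠ 0 := pow_ne_zero _ hp.ne_zero
  rcases Nat.eq_zero_or_pos k with rfl | hk
  · simp only [pow_zero]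
    rw [(X2_mult.mul X_mult).map_one, (IS_mult.mul (IP_mult.mul IP_mult)).map_one]
    norm_num
  have hm : p % 4 = 0 ∨ p % 4 = 1 ∨ p % 4 = 2 ∨ p % 4 = 3 := by omega
  have hval : (X2 * X) (p ^ k) = ∑ i ∈ range (k + 1), ch p ^ (2 * (k - i)) * ch p ^ i := by
    rw [mul_comm, mul_apply, Nat.sum_divisorsAntidiagonal (fun a b => X a * X2 b),
      Nat.divisors_prime_pow hp, sum_map]
    refine sum_congr rfl fun i hi => ?_
    simp only [mem_range] at hi
    simp only [Function.Embedding.coeFn_mk, X, X2, coe_mk]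
    rw [Nat.pow_div (by omega) hp.pos, ch_pow, ch_pow, ← pow_mul]
    ring
  have h1G : (IP * IP) (p ^ k) ≤ (IS * (IP * IP)) (p ^ k) := by
    rw [ArithmeticFunction.mul_apply (f := IS)]
    have : ((1 : ℕ), p ^ k) ∈ (p ^ k).divisorsAntidiagonal := by simp [hp.ne_zero]
    refine le_trans (le_of_eq ?_) (single_le_sum (f := fun x : ℕ × ℕ => IS x.1 * (IP * IP) x.2)
      (fun x _ => mul_nonneg (IS_nonneg _) (hPP _)) this)
    simp [IS_mult.map_one]
  by_cases h1 : p % 4 = 1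
  · have c1 : ch p = 1 := by simp [ch, h1]
    constructor
    · rw [hval, c1]; simp; positivity
    refine le_trans (le_of_eq ?_) h1G
    rw [mul_apply, mul_apply]
    refine sum_congr rfl fun x hx => ?_
    rw [Nat.mem_divisorsAntidiagonal] at hx
    have hP : InP1 (p ^ k) := InP1_pow (InP1_prime hp h1) k
    rw [← hx.1, InP1_mul] at hP
    simp only [X2, X, IP, coe_mk, if_pos hP.1, if_pos hP.2]
    have hc : ∀ n, n ∣ p ^ k → ch n = 1 := by
      intro n hn
      obtain ⟨i, _, rfl⟩ := (Nat.dvd_prime_pow hp).1 hn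
      rw [ch_pow, c1, one_pow]
    rw [hc x.1 ⟨x.2, hx.1.symm⟩, hc x.2 ⟨x.1, by rw [mul_comm]; exact hx.1.symm⟩]
    norm_num
  by_cases h3 : p % 4 = 3
  · have c3 : ch p = -1 := by simp [ch, h3]
    have hv : (X2 * X) (p ^ k) = if Even (k + 1) then 0 else 1 := by
      rw [hval, c3, ← neg_one_geom_sum]
      refine sum_congr rfl fun i hi => ?_
      rw [pow_mul]; norm_num
    rw [hv]
    split_ifs with he
    · exact ⟨le_rfl, hG _⟩
    · refine ⟨zero_le_one, ?_⟩
      rw [ArithmeticFunction.mul_apply (f := IS)]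
      have : (p ^ k, (1 : ℕ)) ∈ (p ^ k).divisorsAntidiagonal := by simp [hp.ne_zero]
      refine le_trans (le_of_eq ?_) (single_le_sum (f := fun x : ℕ × ℕ => IS x.1 * (IP * IP) x.2)
        (fun x _ => mul_nonneg (IS_nonneg _) (hPP _)) this)
      have hs : IsSquare (p ^ k) := by
        have : Even k := by grind
        exact this.isSquare_pow p
      simp only [(IP_mult.mul IP_mult).map_one, IS, coe_mk]
      simp [hs, hp.ne_zero]
  · have c0 : ch p = 0 := by simp [ch, h1, h3]
    have hv : (X2 * X) (p ^ k) = 0 := by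
      rw [hval, c0]
      refine sum_eq_zero fun i hi => ?_
      rw [← pow_add, zero_pow]
      simp only [mem_range] at hi; omega
    rw [hv]
    exact ⟨le_rfl, hG _⟩

lemma r_le (n : ℕ) : (X2 * X) n ≤ (IS * (IP * IP)) n := by
  rcases eq_or_ne n 0 with rfl | hn
  · simp
  rw [(X2_mult.mul X_mult).multiplicative_factorization _ hn,
    (IS_mult.mul (IP_mult.mul IP_mult)).multiplicative_factorization _ hn]
  refine prod_le_prod ?_ ?_
  · intro p hp
    exact (prime_pow_le p _ (Nat.prime_of_mem_primeFactors (by simpa using hp))).1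
  · intro p hp
    exact (prime_pow_le p _ (Nat.prime_of_mem_primeFactors (by simpa using hp))).2

lemma sum_IS_le (N : ℕ) : ∑ n ∈ Ioc 0 N, IS n / n ≤ 2 := by
  have h1 : ∑ n ∈ Ioc 0 N, IS n / n ≤ ∑ b ∈ Ioc 0 N, 1 / ((b : ℝ) ^ 2) := by
    have : ∑ n ∈ (Ioc 0 N).image (fun b => b * b), IS n / n = ∑ b ∈ Ioc 0 N, 1 / ((b : ℝ) ^ 2) := by
      rw [sum_image]
      · refine sum_congr rfl fun b hb => ?_
        simp only [mem_Ioc] at hb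
        simp only [IS, coe_mk]
        rw [if_pos ⟨(Nat.mul_pos hb.1 hb.1).ne', b, rfl⟩]
        push_cast; rw [sq]
      · intro a _ b _ h
        exact Nat.mul_self_inj.1 h
    rw [← this]
    have : ∑ n ∈ Ioc 0 N, IS n / n = ∑ n ∈ Ioc 0 N with IsSquare n, IS n / n := by
      symm
      refine sum_filter_of_ne fun n hn h => ?_
      by_contra hc
      apply h
      simp [IS, hc]
    rw [this]
    refine sum_le_sum_of_subset_of_nonneg ?_ fun n _ _ => div_nonneg (IS_nonneg n) (Nat.cast_nonneg n)
    intro n hn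
    simp only [mem_filter, mem_Ioc] at hn
    obtain ⟨⟨h0, hN⟩, b, rfl⟩ := hn
    simp only [mem_image, mem_Ioc]
    refine ⟨b, ⟨Nat.pos_of_mul_pos_left h0, ?_⟩, rfl⟩
    nlinarith [Nat.pos_of_mul_pos_left h0]
  rcases Nat.eq_zero_or_pos N with rfl | hN
  · simp
  have h2 : ∑ b ∈ Ioc 0 N, 1 / ((b : ℝ) ^ 2) ≤ 2 - 1 / (N : ℝ) := by
    clear h1
    induction N, hN using Nat.le_induction with
    | base => norm_num
    | succ N hN ih =>
      rw [sum_Ioc_succ_top (Nat.zero_le N)]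
      have hN' : (0 : ℝ) < N := by exact_mod_cast hN
      have : (1 : ℝ) / ((N + 1 : ℕ) : ℝ) ^ 2 ≤ 1 / (N : ℝ) - 1 / ((N + 1 : ℕ) : ℝ) := by
        push_cast
        rw [div_sub_div _ _ hN'.ne' (by positivity), div_le_div_iff₀ (by positivity) (by positivity)]
        nlinarith
      linarith
  have : (0 : ℝ) ≤ 1 / (N : ℝ) := by positivity
  linarith

/-- the sum of reciprocals over P1 -/
noncomputable def M (N : ℕ) : ℝ := ∑ n ∈ Ioc 0 N, IP n / n

lemma M_nonneg (N : ℕ) : 0 ≤ M N :=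
  sum_nonneg fun n _ => div_nonneg (IP_nonneg n) (Nat.cast_nonneg n)

lemma harm_ge (N : ℕ) : Real.log ((N : ℝ) + 1) ≤ ∑ n ∈ Ioc 0 N, 1 / (n : ℝ) := by
  have := log_add_one_le_harmonic N
  rw [harmonic_eq_sum_Icc] at this
  push_cast at this
  refine this.trans (le_of_eq ?_)
  refine sum_congr ?_ fun n _ => by simp
  ext; simp; omega

lemma sum_X2_ge (N : ℕ) : 1 / 2 * Real.log ((N : ℝ) + 1) ≤ ∑ n ∈ Ioc 0 N, X2 n / n := by
  have h1 := harm_ge N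
  have h2 : ∑ n ∈ Ioc 0 N, 1 / (n : ℝ) = ∑ n ∈ Ioc 0 N, X2 n / n +
      ∑ n ∈ Ioc 0 N with n % 2 = 0, 1 / (n : ℝ) := by
    rw [sum_filter, ← sum_add_distrib]
    refine sum_congr rfl fun n _ => ?_
    simp only [X2, coe_mk, ch]
    have hm : n % 4 = 0 ∨ n % 4 = 1 ∨ n % 4 = 2 ∨ n % 4 = 3 := by omega
    by_cases he : n % 2 = 0
    · rw [if_neg (by omega), if_neg (by omega), if_pos he]; simp
    · rw [if_neg he]
      by_cases h1 : n % 4 = 1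
      · simp [h1]
      · rw [if_neg h1, if_pos (by omega)]; simp
  have h3 : ∑ n ∈ Ioc 0 N with n % 2 = 0, 1 / (n : ℝ) ≤ 1 / 2 * ∑ n ∈ Ioc 0 N, 1 / (n : ℝ) := by
    rw [mul_sum]
    have : ∑ n ∈ (Ioc 0 N).image (fun n : ℕ => 2 * n), 1 / (n : ℝ)
        = ∑ n ∈ Ioc 0 N, 1 / 2 * (1 / (n : ℝ)) := by
      rw [sum_image (fun a _ b _ h => by grind)]
      refine sum_congr rfl fun n _ => ?_
      push_cast
      rw [one_div_mul_one_div]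
    rw [← this]
    refine sum_le_sum_of_subset_of_nonneg ?_ fun n _ _ => by positivity
    intro n hn
    simp only [mem_filter, mem_Ioc, mem_image] at hn ⊢
    exact ⟨n / 2, by omega, by omega⟩
  linarith

lemma M_sq_ge (N : ℕ) : 1 / 6 * Real.log ((N : ℝ) + 1) ≤ M N ^ 2 := by
  have h1 : ∑ n ∈ Ioc 0 N, (X2 * X) n / n ≤ ∑ n ∈ Ioc 0 N, (IS * (IP * IP)) n / n :=
    sum_le_sum fun n _ => div_le_div_of_nonneg_right (r_le n) (Nat.cast_nonneg n)
  have h2 := sum_w_le IS (IP * IP) IS_nonneg (mul_nonneg' _ _ IP_nonneg IP_nonneg) N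
  have h3 := sum_w_le IP IP IP_nonneg IP_nonneg N
  have h4 := sum_IS_le N
  have h5 : ∑ n ∈ Ioc 0 N, X2 n / n * (2 / 3) ≤ ∑ n ∈ Ioc 0 N, (X2 * X) n / n := by
    rw [sum_w_mul]
    refine sum_le_sum fun n hn => ?_
    refine mul_le_mul_of_nonneg_left ?_ (div_nonneg (sq_nonneg _) (Nat.cast_nonneg n))
    simp only [mem_Ioc] at hn
    exact B_ge _ (Nat.div_pos hn.2 hn.1)
  rw [← sum_mul] at h5
  have h6 := sum_X2_ge N
  change _ ≤ M N * M N at h3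
  have h7 : (∑ n ∈ Ioc 0 N, IS n / n) * ∑ m ∈ Ioc 0 N, (IP * IP) m / m ≤ 2 * (M N * M N) := by
    refine mul_le_mul h4 h3 ?_ (by norm_num)
    exact sum_nonneg fun n _ => div_nonneg (mul_nonneg' _ _ IP_nonneg IP_nonneg n) (Nat.cast_nonneg n)
  nlinarith

open Chebyshev in
lemma sum_log_eq (N : ℕ) : ∑ n ∈ Ioc 0 N, Real.log n =
    ∑ n ∈ Ioc 0 N, vonMangoldt n * ((N / n : ℕ) : ℝ) := by
  rw [← sum_Ioc_mul_zeta_eq_sum vonMangoldt N, vonMangoldt_mul_zeta]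
  simp [log_apply]

lemma sum_log_ge (N : ℕ) : (N : ℝ) * Real.log N - N ≤ ∑ n ∈ Ioc 0 N, Real.log n := by
  induction N with
  | zero => simp
  | succ N ih =>
    rw [sum_Ioc_succ_top (Nat.zero_le N)]
    rcases Nat.eq_zero_or_pos N with rfl | hN
    · simp
    have hN' : (0 : ℝ) < N := by exact_mod_cast hN
    have h1 : Real.log ((N : ℝ) + 1) - Real.log N ≤ 1 / N := by
      rw [← Real.log_div (by positivity) (by positivity)]
      refine (Real.log_le_sub_one_of_pos (by positivity)).trans (le_of_eq ?_)
      field_simp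
      ring
    have h2 : (N : ℝ) * (Real.log ((N : ℝ) + 1) - Real.log N) ≤ 1 := by
      calc _ ≤ (N : ℝ) * (1 / N) := mul_le_mul_of_nonneg_left h1 hN'.le
        _ = 1 := by field_simp
    push_cast
    nlinarith

lemma sum_log_le (N : ℕ) : ∑ n ∈ Ioc 0 N, Real.log n ≤ (N : ℝ) * Real.log N := by
  calc ∑ n ∈ Ioc 0 N, Real.log n ≤ ∑ n ∈ Ioc 0 N, Real.log N := by
        refine sum_le_sum fun n hn => ?_
        simp only [mem_Ioc] at hn
        exact Real.log_le_log (by exact_mod_cast hn.1) (by exact_mod_cast hn.2)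
    _ = _ := by simp

lemma psi_nat (N : ℕ) : ∑ n ∈ Ioc 0 N, vonMangoldt n ≤ (Real.log 4 + 4) * N := by
  have := Chebyshev.psi_le_const_mul_self (x := N) (Nat.cast_nonneg N)
  simpa [Chebyshev.psi] using this

lemma mertens_ge (N : ℕ) (hN : 0 < N) :
    Real.log N - 1 ≤ ∑ n ∈ Ioc 0 N, vonMangoldt n / n := by
  have hN' : (0 : ℝ) < N := by exact_mod_cast hN
  have h1 := sum_log_ge N
  rw [sum_log_eq] at h1
  have h2 : ∑ n ∈ Ioc 0 N, vonMangoldt n * ((N / n : ℕ) : ℝ) ≤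
      N * ∑ n ∈ Ioc 0 N, vonMangoldt n / n := by
    rw [mul_sum]
    refine sum_le_sum fun n hn => ?_
    calc vonMangoldt n * ((N / n : ℕ) : ℝ) ≤ vonMangoldt n * ((N : ℝ) / n) :=
          mul_le_mul_of_nonneg_left Nat.cast_div_le vonMangoldt_nonneg
      _ = _ := by ring
  have h3 : N * (Real.log N - 1) ≤ N * ∑ n ∈ Ioc 0 N, vonMangoldt n / n := by linarith
  exact le_of_mul_le_mul_left h3 hN'

lemma mertens_le (N : ℕ) (hN : 0 < N) :
    ∑ n ∈ Ioc 0 N, vonMangoldt n / n ≤ Real.log N + (Real.log 4 + 4) := by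
  have hN' : (0 : ℝ) < N := by exact_mod_cast hN
  have h1 := sum_log_le N
  rw [sum_log_eq] at h1
  have h0 := psi_nat N
  have h2 : N * ∑ n ∈ Ioc 0 N, vonMangoldt n / n ≤
      ∑ n ∈ Ioc 0 N, vonMangoldt n * ((N / n : ℕ) : ℝ) + ∑ n ∈ Ioc 0 N, vonMangoldt n := by
    rw [mul_sum, ← sum_add_distrib]
    refine sum_le_sum fun n hn => ?_
    simp only [mem_Ioc] at hn
    have hn' : (0 : ℝ) < n := by exact_mod_cast hn.1
    have h : (N : ℝ) / n ≤ ((N / n : ℕ) : ℝ) + 1 := by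
      rw [div_le_iff₀ hn']
      have := Nat.lt_div_mul_add (a := N) hn.1
      have h' : N ≤ (N / n + 1) * n := by nlinarith
      exact_mod_cast h'
    calc (N : ℝ) * (vonMangoldt n / n) = vonMangoldt n * ((N : ℝ) / n) := by ring
      _ ≤ vonMangoldt n * (((N / n : ℕ) : ℝ) + 1) := mul_le_mul_of_nonneg_left h vonMangoldt_nonneg
      _ = _ := by ring
  have h3 : N * ∑ n ∈ Ioc 0 N, vonMangoldt n / n ≤ N * (Real.log N + (Real.log 4 + 4)) := by linarith
  exact le_of_mul_le_mul_left h3 hN'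

lemma sum_ch_log (N : ℕ) : |∑ n ∈ Ioc 0 N, ch n * (Real.log n / n)| ≤ 1 := by
  by_cases h : N < 3
  · interval_cases N
    · simp
    · norm_num [ch]
    · norm_num [sum_Ioc_succ_top, ch]
  · rw [← sum_Ioc_consecutive (fun n : ℕ => ch n * (Real.log n / n)) (Nat.zero_le 2) (by omega : 2 ≤ N)]
    have h0 : ∑ n ∈ Ioc 0 2, ch n * (Real.log n / n) = 0 := by norm_num [sum_Ioc_succ_top, ch]
    rw [h0, zero_add]
    refine (alt_abs (fun n : ℕ => Real.log n / n) 3 ?_ ?_ 2 N (by norm_num)).trans ?_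
    · intro n hn
      exact div_nonneg (Real.log_natCast_nonneg n) (Nat.cast_nonneg n)
    · intro n hn
      have hn' : (3 : ℝ) ≤ n := by exact_mod_cast hn
      have he := Real.exp_one_lt_d9
      refine Real.log_div_self_antitoneOn ?_ ?_ ?_
      · change Real.exp 1 ≤ (n : ℝ); linarith
      · change Real.exp 1 ≤ ((n + 1 : ℕ) : ℝ); push_cast; linarith
      · push_cast; linarith
    · have := Real.log_le_sub_one_of_pos (x := 3) (by norm_num)
      norm_num
      linarith

noncomputable def LX : ArithmeticFunction ℝ := ⟨fun n => vonMangoldt n * ch n, by simp⟩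

lemma LX_mul_X (n : ℕ) : (LX * X) n = ch n * Real.log n := by
  rw [ArithmeticFunction.mul_apply, ← vonMangoldt_sum, mul_sum,
    Nat.sum_divisorsAntidiagonal (fun a b => LX a * X b)]
  refine sum_congr rfl fun d hd => ?_
  have hd' := Nat.dvd_of_mem_divisors hd
  conv_rhs => rw [← Nat.mul_div_cancel' hd', ch_mul]
  simp only [LX, X, coe_mk]
  ring

lemma mertens_ch (N : ℕ) (hN : 0 < N) :
    |∑ n ∈ Ioc 0 N, vonMangoldt n * ch n / n| ≤ 3 / 2 * (1 + (Real.log 4 + 4)) := by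
  have hN' : (0 : ℝ) < N := by exact_mod_cast hN
  have h1 := sum_w_mul LX X N
  have h2 := sum_ch_log N
  have h3 : ∑ n ∈ Ioc 0 N, (LX * X) n / n = ∑ n ∈ Ioc 0 N, ch n * (Real.log n / n) :=
    sum_congr rfl fun n _ => by rw [LX_mul_X]; ring
  rw [← h3, h1] at h2
  set S := ∑ n ∈ Ioc 0 N, vonMangoldt n * ch n / n with hS
  have h4 : |∑ n ∈ Ioc 0 N, LX n / n * ∑ m ∈ Ioc 0 (N / n), X m / m - S * B N| ≤ Real.log 4 + 4 := by
    rw [hS, sum_mul, ← sum_sub_distrib]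
    refine (abs_sum_le_sum_abs _ _).trans ?_
    have h5 : ∑ n ∈ Ioc 0 N, vonMangoldt n / N ≤ Real.log 4 + 4 := by
      rw [← sum_div, div_le_iff₀ hN']
      exact psi_nat N
    refine le_trans (sum_le_sum fun n hn => ?_) h5
    simp only [mem_Ioc] at hn
    have hn' : (0 : ℝ) < n := by exact_mod_cast hn.1
    change |vonMangoldt n * ch n / n * B (N / n) - vonMangoldt n * ch n / n * B N| ≤ _
    rw [← mul_sub, abs_mul, abs_div, abs_mul, abs_of_nonneg (vonMangoldt_nonneg (n := n)),
      abs_of_pos hn', abs_sub_comm]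
    have h6 : |B N - B (N / n)| ≤ n / N := by
      refine (B_sub _ _ (Nat.div_le_self N n)).trans ?_
      rw [div_le_div_iff₀ (by positivity) hN']
      have := Nat.lt_div_mul_add (a := N) hn.1
      have h' : N ≤ n * (N / n + 1) := by nlinarith
      have : (N : ℝ) ≤ n * (((N / n : ℕ) : ℝ) + 1) := by exact_mod_cast h'
      linarith
    calc vonMangoldt n * |ch n| / n * |B N - B (N / n)| ≤ vonMangoldt n * 1 / n * (n / N) := by
          have := vonMangoldt_nonneg (n := n)
          gcongr
          exact abs_ch_le n
      _ = _ := by field_simp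
  have h7 : |S * B N| ≤ 1 + (Real.log 4 + 4) := by
    have := abs_sub_abs_le_abs_sub (S * B N) (∑ n ∈ Ioc 0 N, LX n / n * ∑ m ∈ Ioc 0 (N / n), X m / m)
    rw [abs_sub_comm] at this
    linarith
  have hB := B_ge N hN
  rw [abs_mul, abs_of_pos (by linarith : 0 < B N)] at h7
  nlinarith [abs_nonneg S]

noncomputable def th (N : ℕ) : ℝ := ∑ p ∈ Ioc 0 N with p.Prime ∧ p % 4 = 1, Real.log p

lemma th_mono {a b : ℕ} (h : a ≤ b) : th a ≤ th b := by
  unfold th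
  refine sum_le_sum_of_subset_of_nonneg ?_ fun p _ _ => Real.log_natCast_nonneg p
  exact filter_subset_filter _ (Ioc_subset_Ioc_right h)

lemma term_le (n : ℕ) : vonMangoldt n * (1 + ch n) ≤
    2 * (if n.Prime ∧ n % 4 = 1 then Real.log n else 0) +
    2 * (if ¬ n.Prime then vonMangoldt n else 0) + (if n = 2 then 1 else 0) := by
  have h0 := vonMangoldt_nonneg (n := n)
  by_cases hp : n.Prime
  · rw [vonMangoldt_apply_prime hp]
    rcases hp.eq_two_or_odd with rfl | h
    · have := Real.log_two_lt_d9
      norm_num [ch]; linarith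
    · have h4 : n % 4 = 1 ∨ n % 4 = 3 := by omega
      have hn2 : n ≠ 2 := by rintro rfl; omega
      rcases h4 with h4 | h4
      · simp [hp, ch, h4, hn2]; linarith
      · simp [hp, ch, h4, hn2]
  · have hn2 : n ≠ 2 := by rintro rfl; exact hp Nat.prime_two
    simp [hp, hn2]
    have := (abs_le.1 (abs_ch_le n)).2
    nlinarith

lemma sum_term_le (N : ℕ) : ∑ n ∈ Ioc 0 N, vonMangoldt n * (1 + ch n) ≤
    2 * th N + 2 * (Chebyshev.psi N - Chebyshev.theta N) + 1 := by
  refine (sum_le_sum fun n _ => term_le n).trans ?_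
  rw [sum_add_distrib, sum_add_distrib, ← mul_sum, ← mul_sum, ← sum_filter, ← sum_filter,
    Chebyshev.psi_sub_theta_eq_sum_not_prime, Nat.floor_natCast]
  have : ∑ n ∈ Ioc 0 N, (if n = 2 then (1 : ℝ) else 0) ≤ 1 := by
    rw [sum_ite_eq']; split_ifs <;> norm_num
  unfold th
  linarith

lemma th_big : ∃ A : ℕ, 0 < A ∧ ∀ y : ℕ, 0 < y →
    4 * (y : ℝ) ≤ 2 * th (A * y) + 2 * (Chebyshev.psi (A * y : ℕ) - Chebyshev.theta (A * y : ℕ)) + 1 := by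
  set K := 4 + 1 + (Real.log 4 + 4) + 3 * (1 + (Real.log 4 + 4)) with hK
  obtain ⟨A, hA⟩ := exists_nat_ge (Real.exp K)
  have hA0 : (0 : ℝ) < A := (Real.exp_pos K).trans_le hA
  have hA0' : 0 < A := by exact_mod_cast hA0
  refine ⟨A, hA0', fun y hy => ?_⟩
  have hy' : (0 : ℝ) < y := by exact_mod_cast hy
  have hlog : K ≤ Real.log A := by
    rw [Real.le_log_iff_exp_le hA0]; exact hA
  have hAy : 0 < A * y := Nat.mul_pos hA0' hy
  have hle : y ≤ A * y := Nat.le_mul_of_pos_left y hA0'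
  have a1 := mertens_ge (A * y) hAy
  have a2 := mertens_le y hy
  have a3 := (abs_le.1 (mertens_ch (A * y) hAy)).1
  have a4 := (abs_le.1 (mertens_ch y hy)).2
  rw [← sum_Ioc_consecutive _ (Nat.zero_le y) hle] at a1 a3
  push_cast at a1
  rw [Real.log_mul hA0.ne' hy'.ne'] at a1
  have a5 : 4 ≤ ∑ n ∈ Ioc y (A * y), (vonMangoldt n * (1 + ch n)) / n := by
    have : ∑ n ∈ Ioc y (A * y), (vonMangoldt n * (1 + ch n)) / n =
      ∑ n ∈ Ioc y (A * y), vonMangoldt n / n + ∑ n ∈ Ioc y (A * y), vonMangoldt n * ch n / n := by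
      rw [← sum_add_distrib]
      exact sum_congr rfl fun n _ => by ring
    rw [this]
    linarith
  have hnn : ∀ n, 0 ≤ vonMangoldt n * (1 + ch n) := fun n =>
    mul_nonneg vonMangoldt_nonneg (by have := (abs_le.1 (abs_ch_le n)).1; linarith)
  have a6 : ∑ n ∈ Ioc y (A * y), (vonMangoldt n * (1 + ch n)) / n ≤
      (∑ n ∈ Ioc 0 (A * y), vonMangoldt n * (1 + ch n)) / y := by
    rw [sum_div]
    refine (sum_le_sum (g := fun n => (vonMangoldt n * (1 + ch n)) / y) fun n hn => ?_).trans ?_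
    · simp only [mem_Ioc] at hn
      exact div_le_div_of_nonneg_left (hnn n) hy' (by exact_mod_cast hn.1.le)
    · exact sum_le_sum_of_subset_of_nonneg (Ioc_subset_Ioc_left (Nat.zero_le y))
        fun n _ _ => div_nonneg (hnn n) hy'.le
  have a7 := a5.trans a6
  rw [le_div_iff₀ hy'] at a7
  exact a7.trans (sum_term_le _)

open Filter Topology in
lemma th_lin : ∃ c : ℝ, 0 < c ∧ ∃ N0 : ℕ, 1 ≤ N0 ∧ ∀ N : ℕ, N0 ≤ N → c * N ≤ th N - Real.log N := by
  obtain ⟨A, hA, h⟩ := th_big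
  obtain ⟨C, hC⟩ := Chebyshev.psi_sub_theta_le_mul_sqrt
  have hA' : (0 : ℝ) < A := by exact_mod_cast hA
  have e1 : ∀ᶠ N : ℕ in atTop, Real.log N ≤ 1 / (4 * A) * N := by
    have := (Real.isLittleO_log_id_atTop.bound (c := 1 / (4 * A)) (by positivity))
    filter_upwards [tendsto_natCast_atTop_atTop.eventually this] with N hN
    simp only [id, Real.norm_eq_abs] at hN
    rw [abs_of_nonneg (Nat.cast_nonneg N : (0 : ℝ) ≤ N)] at hN
    exact (le_abs_self _).trans hN
  have e2 : ∀ᶠ y : ℕ in atTop, (2 * C * Real.sqrt A) ^ 2 + 1 ≤ (y : ℝ) :=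
    tendsto_natCast_atTop_atTop.eventually_ge_atTop _
  obtain ⟨n1, h1⟩ := eventually_atTop.1 e1
  obtain ⟨n2, h2⟩ := eventually_atTop.1 e2
  refine ⟨1 / (4 * A), by positivity, n1 + A * (n2 + 1) + 2 * A, by nlinarith, fun N hN => ?_⟩
  have g1 := h1 N (by nlinarith)
  have hy2 : n2 + 1 ≤ N / A := by
    rw [Nat.le_div_iff_mul_le hA]; nlinarith
  set y := N / A with hy
  have g2 := h2 y (by omega)
  have g3 := h y (by omega)
  have g4 := hC (A * y : ℕ)
  have hAy : A * y ≤ N := Nat.mul_div_le N A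
  have g5 := th_mono hAy
  have hs : Real.sqrt ((A * y : ℕ) : ℝ) = Real.sqrt A * Real.sqrt y := by
    push_cast; rw [Real.sqrt_mul hA'.le]
  rw [hs] at g4
  have g6 : 2 * C * Real.sqrt A * Real.sqrt y ≤ y := by
    have hq : |2 * C * Real.sqrt A| ≤ Real.sqrt y := Real.abs_le_sqrt (by linarith)
    calc _ ≤ Real.sqrt y * Real.sqrt y :=
          mul_le_mul_of_nonneg_right ((le_abs_self _).trans hq) (Real.sqrt_nonneg _)
      _ = y := Real.mul_self_sqrt (Nat.cast_nonneg y)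
  have g7 : (1 : ℝ) ≤ y := by nlinarith [sq_nonneg (2 * C * Real.sqrt A)]
  have g8 : (y : ℝ) ≤ th N := by nlinarith
  have g9 : (1 / (2 * A) : ℝ) * N ≤ y := by
    have := Nat.lt_div_mul_add (a := N) hA
    rw [← hy] at this
    have hN2 : 2 * A ≤ N := by nlinarith
    have k1 : (N : ℝ) ≤ y * A + A := by exact_mod_cast this.le
    have k2 : (2 * A : ℝ) ≤ N := by exact_mod_cast hN2
    rw [div_mul_eq_mul_div, div_le_iff₀ (by positivity)]
    nlinarith
  have : (1 / (2 * A) : ℝ) * N = 1 / (4 * A) * N + 1 / (4 * A) * N := by ring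
  linarith

def Q (p0 n : ℕ) : Prop := InP1 n ∧ Nat.Coprime n p0

lemma Q_mul {p0 m n : ℕ} (h : Q p0 m) (h' : Q p0 n) : Q p0 (m * n) :=
  ⟨(InP1_mul m n).2 ⟨h.1, h'.1⟩, Nat.Coprime.mul_left h.2 h'.2⟩

open Classical in
noncomputable def IQ (p0 : ℕ) : ArithmeticFunction ℝ :=
  ⟨fun n => if Q p0 n then 1 else 0, by simp [Q, InP1]⟩

noncomputable def LP (p0 : ℕ) : ArithmeticFunction ℝ :=
  ⟨fun n => if (n.Prime ∧ n % 4 = 1) ∧ n ≠ p0 then Real.log n else 0, by simp⟩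

lemma IQ_nonneg (p0 n : ℕ) : 0 ≤ IQ p0 n := by
  simp only [IQ, coe_mk]; split_ifs <;> norm_num

lemma LP_nonneg (p0 n : ℕ) : 0 ≤ LP p0 n := by
  simp only [LP, coe_mk]; split_ifs
  · exact Real.log_natCast_nonneg n
  · exact le_rfl

lemma LP_le (p0 n : ℕ) : LP p0 n ≤ vonMangoldt n := by
  simp only [LP, coe_mk]; split_ifs with h
  · rw [vonMangoldt_apply_prime h.1.1]
  · exact vonMangoldt_nonneg

lemma MQ_ge (p0 : ℕ) (hp : p0.Prime) (N : ℕ) : 1 / 2 * M N ≤ ∑ n ∈ Ioc 0 N, IQ p0 n / n := by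
  have hp2 : (2 : ℝ) ≤ p0 := by exact_mod_cast hp.two_le
  have h1 : M N ≤ ∑ n ∈ Ioc 0 N, IQ p0 n / n + ∑ n ∈ Ioc 0 N with p0 ∣ n, IP n / n := by
    unfold M
    rw [sum_filter, ← sum_add_distrib]
    refine sum_le_sum fun n _ => ?_
    have hn : (0 : ℝ) ≤ n := Nat.cast_nonneg n
    by_cases hd : p0 ∣ n
    · rw [if_pos hd]
      have := div_nonneg (IQ_nonneg p0 n) hn
      linarith
    · rw [if_neg hd, add_zero]
      refine div_le_div_of_nonneg_right ?_ hn
      have hc : n.Coprime p0 := ((Nat.Prime.coprime_iff_not_dvd hp).2 hd).symm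
      by_cases hi : InP1 n
      · have hQ : Q p0 n := ⟨hi, hc⟩
        simp only [IP, IQ, coe_mk, if_pos hi, if_pos hQ]
        exact le_rfl
      · simp [IP, IQ, Q, hi]
  have h2 : ∑ n ∈ Ioc 0 N with p0 ∣ n, IP n / n ≤ 1 / 2 * M N := by
    unfold M
    rw [mul_sum]
    have e : ∑ n ∈ (Ioc 0 N).image (fun n : ℕ => p0 * n), IP n / n ≤
        ∑ n ∈ Ioc 0 N, 1 / 2 * (IP n / n) := by
      rw [sum_image (fun a _ b _ h => Nat.eq_of_mul_eq_mul_left hp.pos h)]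
      refine sum_le_sum fun n hn => ?_
      simp only [mem_Ioc] at hn
      have hn' : (0 : ℝ) < n := by exact_mod_cast hn.1
      have hle : IP (p0 * n) ≤ IP n := by
        simp only [IP, coe_mk]
        by_cases h : InP1 (p0 * n)
        · rw [if_pos h, if_pos ((InP1_mul _ _).1 h).2]
        · rw [if_neg h]; split_ifs <;> norm_num
      push_cast
      calc IP (p0 * n) / (p0 * n) ≤ IP n / (2 * n) := by
            have := IP_nonneg n
            gcongr
        _ = _ := by field_simp
    refine le_trans ?_ e
    refine sum_le_sum_of_subset_of_nonneg ?_ fun n _ _ => div_nonneg (IP_nonneg n) (Nat.cast_nonneg n)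
    intro n hn
    simp only [mem_filter, mem_Ioc, mem_image] at hn ⊢
    obtain ⟨⟨h0, hN⟩, d, rfl⟩ := hn
    refine ⟨d, ⟨Nat.pos_of_mul_pos_left h0, ?_⟩, rfl⟩
    exact (Nat.le_mul_of_pos_left d hp.pos).trans hN
  linarith

lemma sum_LP_ge (p0 K : ℕ) (hK : 1 ≤ K) : th K - Real.log K ≤ ∑ n ∈ Ioc 0 K, LP p0 n := by
  have h1 : th K ≤ ∑ n ∈ Ioc 0 K, LP p0 n + ∑ n ∈ Ioc 0 K, (if n = p0 then Real.log K else 0) := by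
    unfold th
    rw [sum_filter, ← sum_add_distrib]
    refine sum_le_sum fun n hn => ?_
    simp only [mem_Ioc] at hn
    have hl : Real.log n ≤ Real.log K :=
      Real.log_le_log (by exact_mod_cast hn.1) (by exact_mod_cast hn.2)
    have h0 := Real.log_natCast_nonneg n
    simp only [LP, coe_mk]
    by_cases h : n = p0
    · rw [if_pos h, if_neg (by tauto : ¬ ((n.Prime ∧ n % 4 = 1) ∧ n ≠ p0))]
      split_ifs <;> linarith
    · rw [if_neg h]
      simp [h]
  have h2 : ∑ n ∈ Ioc 0 K, (if n = p0 then Real.log K else 0) ≤ Real.log K := by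
    rw [sum_ite_eq']
    split_ifs
    · exact le_rfl
    · exact Real.log_natCast_nonneg K
  linarith

lemma conv_le (p0 : ℕ) (hp : p0.Prime) (n : ℕ) : (IQ p0 * LP p0) n ≤ IQ p0 n * Real.log n := by
  rw [ArithmeticFunction.mul_apply]
  by_cases h : Q p0 n
  · have e : IQ p0 n = 1 := by simp [IQ, h]
    rw [e, one_mul, ← vonMangoldt_sum, ← Nat.sum_divisorsAntidiagonal' (fun _ b => vonMangoldt b)]
    refine sum_le_sum fun x _ => ?_
    calc IQ p0 x.1 * LP p0 x.2 ≤ 1 * LP p0 x.2 := by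
          refine mul_le_mul_of_nonneg_right ?_ (LP_nonneg _ _)
          simp only [IQ, coe_mk]; split_ifs <;> norm_num
      _ ≤ _ := by rw [one_mul]; exact LP_le _ _
  · have e : IQ p0 n = 0 := by simp [IQ, h]
    rw [e, zero_mul]
    refine le_of_eq (sum_eq_zero fun x hx => ?_)
    rw [Nat.mem_divisorsAntidiagonal] at hx
    by_cases h1 : Q p0 x.1
    · have : LP p0 x.2 = 0 := by
        simp only [LP, coe_mk]
        rw [if_neg]
        rintro ⟨⟨a, b⟩, c⟩
        refine h ?_
        rw [← hx.1]
        exact Q_mul h1 ⟨InP1_prime a b, (Nat.coprime_primes a hp).2 c⟩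
      rw [this, mul_zero]
    · simp [IQ, h1]

noncomputable def cnt (p0 N : ℕ) : ℝ := ∑ n ∈ Ioc 0 N, IQ p0 n

lemma cnt_lower : ∃ c : ℝ, 0 < c ∧ ∃ N1 : ℕ, 2 ≤ N1 ∧ ∀ p0 : ℕ, p0.Prime → ∀ N : ℕ, N1 ≤ N →
    c * N ≤ cnt p0 N * Real.sqrt (Real.log N) := by
  obtain ⟨c, hc, N0, hN0, h⟩ := th_lin
  refine ⟨c / 16, by positivity, N0 ^ 2 + 2, by omega, fun p0 hp N hN => ?_⟩
  have hN2 : 2 ≤ N := by nlinarith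
  have hNr : (2 : ℝ) ≤ N := by exact_mod_cast hN2
  have hN0r : (0 : ℝ) < N0 := by exact_mod_cast hN0
  have hlog : 0 < Real.log N := Real.log_pos (by linarith)
  have h1 : ∑ n ∈ Ioc 0 N, (IQ p0 * LP p0) n ≤ cnt p0 N * Real.log N := by
    unfold cnt
    rw [sum_mul]
    refine sum_le_sum fun n hn => (conv_le p0 hp n).trans ?_
    simp only [mem_Ioc] at hn
    exact mul_le_mul_of_nonneg_left
      (Real.log_le_log (by exact_mod_cast hn.1) (by exact_mod_cast hn.2)) (IQ_nonneg _ _)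
  rw [sum_Ioc_mul_eq_sum_sum] at h1
  have h2 : c / 2 * N * ∑ n ∈ Ioc 0 (N / N0), IQ p0 n / n ≤
      ∑ n ∈ Ioc 0 N, IQ p0 n * ∑ m ∈ Ioc 0 (N / n), LP p0 m := by
    rw [mul_sum]
    refine (sum_le_sum fun n hn => ?_).trans
      (sum_le_sum_of_subset_of_nonneg (Ioc_subset_Ioc_right (Nat.div_le_self N N0))
        fun n _ _ => mul_nonneg (IQ_nonneg _ _) (sum_nonneg fun m _ => LP_nonneg _ _))
    simp only [mem_Ioc] at hn
    have hn' : (0 : ℝ) < n := by exact_mod_cast hn.1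
    have hq : N0 ≤ N / n := by
      rw [Nat.le_div_iff_mul_le hn.1, mul_comm]
      exact (Nat.le_div_iff_mul_le hN0).1 hn.2
    have k1 := h (N / n) hq
    have k2 := sum_LP_ge p0 (N / n) (by omega)
    have k3 : (N : ℝ) / (2 * n) ≤ ((N / n : ℕ) : ℝ) := by
      rw [div_le_iff₀ (by positivity)]
      have t := Nat.lt_div_mul_add (a := N) hn.1
      have t2 : n ≤ N / n * n := Nat.le_mul_of_pos_left n (by omega)
      have t3 : N ≤ (N / n) * (2 * n) := by nlinarith
      exact_mod_cast t3
    calc c / 2 * N * (IQ p0 n / n) = IQ p0 n * (c * ((N : ℝ) / (2 * n))) := by field_simp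
      _ ≤ IQ p0 n * ∑ m ∈ Ioc 0 (N / n), LP p0 m := by
        refine mul_le_mul_of_nonneg_left ?_ (IQ_nonneg _ _)
        have := mul_le_mul_of_nonneg_left k3 hc.le
        linarith
  have h3 := MQ_ge p0 hp (N / N0)
  have h4 := M_sq_ge (N / N0)
  have h5 : 1 / 2 * Real.log N ≤ Real.log (((N / N0 : ℕ) : ℝ) + 1) := by
    rw [one_div_mul_eq_div, ← Real.log_sqrt (by linarith)]
    refine Real.log_le_log (Real.sqrt_pos.2 (by linarith)) ?_
    have t := Nat.lt_div_mul_add (a := N) hN0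
    have t1 : (N : ℝ) ≤ (((N / N0 : ℕ) : ℝ) + 1) * N0 := by
      have : N ≤ (N / N0 + 1) * N0 := by nlinarith
      exact_mod_cast this
    have t2 : (N0 : ℝ) ≤ Real.sqrt N := by
      refine Real.le_sqrt_of_sq_le ?_
      have : N0 ^ 2 ≤ N := by omega
      exact_mod_cast this
    have t3 := Real.mul_self_sqrt (by linarith : (0 : ℝ) ≤ N)
    have t4 : Real.sqrt N * Real.sqrt N ≤ (((N / N0 : ℕ) : ℝ) + 1) * Real.sqrt N := by
      rw [t3]
      exact t1.trans (mul_le_mul_of_nonneg_left t2 (by positivity))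
    exact le_of_mul_le_mul_right t4 (Real.sqrt_pos.2 (by linarith))
  set s := Real.sqrt (Real.log N) with hs
  have hs0 : 0 < s := Real.sqrt_pos.2 hlog
  have hss : s * s = Real.log N := Real.mul_self_sqrt hlog.le
  have h6 : 1 / 4 * s ≤ M (N / N0) := by
    refine abs_le_of_sq_le_sq' ?_ (M_nonneg _) |>.2
    nlinarith
  have h7 : c / 16 * N * s ≤ cnt p0 N * s * s := by
    calc c / 16 * N * s = c / 2 * N * (1 / 2 * (1 / 4 * s)) := by ring
      _ ≤ c / 2 * N * ∑ n ∈ Ioc 0 (N / N0), IQ p0 n / n := by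
        refine mul_le_mul_of_nonneg_left ?_ (by positivity)
        linarith
      _ ≤ cnt p0 N * Real.log N := h2.trans h1
      _ = _ := by rw [← hss]; ring
  exact le_of_mul_le_mul_right h7 hs0

lemma final : ∃ C : ℝ, 0 < C ∧ ∀ p0 : ℕ, p0.Prime → ∀ k : ℕ, 2 ≤ k →
      ((Nat.nth (Q p0) (k - 1) : ℕ) : ℝ) ≤
        C * (k : ℝ) * Real.sqrt (Real.log k) := by
  classical
  obtain ⟨c', hc', N1, hN1, hmain'⟩ := cnt_lower
  set c := min c' 1 with hcdef
  have hc : 0 < c := lt_min hc' one_pos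
  have hc1 : c ≤ 1 := min_le_right _ _
  have hmain : ∀ p0 : ℕ, p0.Prime → ∀ N : ℕ, N1 ≤ N →
    c * N ≤ cnt p0 N * Real.sqrt (Real.log N) := fun p0 hp N hN =>
    (mul_le_mul_of_nonneg_right (min_le_left _ _) (Nat.cast_nonneg N)).trans (hmain' p0 hp N hN)
  have hl2 : 0 < Real.log 2 := Real.log_pos (by norm_num)
  have hlc : 0 ≤ Real.log (1 / c) := Real.log_nonneg (by rw [le_div_iff₀ hc]; linarith)
  set Bc := 2 + 2 * Real.log (1 / c) / Real.log 2 with hBc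
  have hB0 : 0 ≤ Bc := by positivity
  refine ⟨N1 / Real.sqrt (Real.log 2) + Real.sqrt Bc / c + 1, by positivity, fun p0 hp k hk => ?_⟩
  have hkr : (2 : ℝ) ≤ k := by exact_mod_cast hk
  have hlk : Real.log 2 ≤ Real.log k := Real.log_le_log (by norm_num) hkr
  set sk := Real.sqrt (Real.log k) with hsk
  have hsk2 : Real.sqrt (Real.log 2) ≤ sk := Real.sqrt_le_sqrt hlk
  have hs2 : 0 < Real.sqrt (Real.log 2) := Real.sqrt_pos.2 hl2
  have hsk0 : 0 < sk := hs2.trans_le hsk2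
  set h := Nat.nth (Q p0) (k - 1) with hh
  by_cases hsmall : h < N1
  · have h1 : (h : ℝ) ≤ N1 := by exact_mod_cast hsmall.le
    have h2 : (N1 : ℝ) ≤ N1 / Real.sqrt (Real.log 2) * k * sk := by
      calc (N1 : ℝ) = N1 / Real.sqrt (Real.log 2) * 1 * Real.sqrt (Real.log 2) := by
            field_simp
        _ ≤ _ := by gcongr; linarith
    have h3 : 0 ≤ (Real.sqrt Bc / c + 1) * k * sk := by positivity
    linarith
  push Not at hsmall
  have hcard : ∀ hf : (Set.ofPred (Q p0)).Finite, k - 1 < #hf.toFinset := by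
    intro hf
    by_contra hcon
    push Not at hcon
    have := Nat.nth_of_card_le hf hcon
    omega
  have hcount := Nat.count_nth_succ hcard
  rw [← hh, Nat.count_eq_card_filter_range, show k - 1 + 1 = k by omega] at hcount
  have hcnt : cnt p0 h = k := by
    rw [← hcount]
    unfold cnt
    simp only [IQ, coe_mk]
    rw [sum_ite, sum_const_zero, add_zero, sum_const, nsmul_eq_mul, mul_one]
    congr 2
    ext n
    simp only [mem_filter, mem_Ioc, mem_range]
    constructor
    · rintro ⟨a, b⟩; exact ⟨by omega, b⟩
    · rintro ⟨a, b⟩; exact ⟨⟨b.1.1, by omega⟩, b⟩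
  have hm := hmain p0 hp h hsmall
  rw [hcnt] at hm
  have hh2 : (2 : ℝ) ≤ h := by exact_mod_cast hN1.trans hsmall
  have hh0 : (0 : ℝ) < h := by linarith
  have a1 : Real.sqrt (Real.log h) ≤ Real.sqrt h :=
    Real.sqrt_le_sqrt ((Real.log_le_sub_one_of_pos hh0).trans (by linarith))
  have a2 : Real.sqrt h ≤ k / c := by
    rw [le_div_iff₀ hc]
    have e := Real.mul_self_sqrt hh0.le
    have : Real.sqrt h * c * Real.sqrt h ≤ k * Real.sqrt h := by
      calc Real.sqrt h * c * Real.sqrt h = c * (Real.sqrt h * Real.sqrt h) := by ring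
        _ = c * h := by rw [e]
        _ ≤ k * Real.sqrt (Real.log h) := hm
        _ ≤ _ := mul_le_mul_of_nonneg_left a1 (by linarith)
    exact le_of_mul_le_mul_right this (Real.sqrt_pos.2 hh0)
  have a3 : Real.log h ≤ Bc * Real.log k := by
    have : Real.log (Real.sqrt h) ≤ Real.log (k / c) :=
      Real.log_le_log (Real.sqrt_pos.2 hh0) a2
    rw [Real.log_sqrt hh0.le, div_eq_mul_one_div (k : ℝ) c,
      Real.log_mul (by linarith) (by positivity)] at this
    have h4 : Real.log (1 / c) ≤ Real.log (1 / c) / Real.log 2 * Real.log k := by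
      calc Real.log (1 / c) = Real.log (1 / c) / Real.log 2 * Real.log 2 := by field_simp
        _ ≤ _ := mul_le_mul_of_nonneg_left hlk (by positivity)
    have h5 : Bc * Real.log k = 2 * Real.log k + 2 * (Real.log (1 / c) / Real.log 2 * Real.log k) := by
      rw [hBc]; ring
    linarith
  have a4 : Real.sqrt (Real.log h) ≤ Real.sqrt Bc * sk := by
    rw [hsk, ← Real.sqrt_mul hB0]
    exact Real.sqrt_le_sqrt a3
  have a5 : (h : ℝ) ≤ Real.sqrt Bc / c * k * sk := by
    have : c * h ≤ k * (Real.sqrt Bc * sk) :=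
      hm.trans (mul_le_mul_of_nonneg_left a4 (by linarith))
    calc (h : ℝ) = (c * h) / c := by field_simp
      _ ≤ (k * (Real.sqrt Bc * sk)) / c := div_le_div_of_nonneg_right this hc.le
      _ = _ := by ring
  have h3 : 0 ≤ (N1 / Real.sqrt (Real.log 2) + 1) * k * sk := by positivity
  linarith

end PP

theorem kth_smallest_P1_integer_coprime_to_p0 :
    ∃ C : ℝ, 0 < C ∧ ∀ p0 : ℕ, p0.Prime → ∀ k : ℕ, 2 ≤ k →
      ((Nat.nth (fun n => InP1 n ∧ Nat.Coprime n p0) (k - 1) : ℕ) : ℝ) ≤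
        C * (k : ℝ) * Real.sqrt (Real.log k) := by
  exact PP.final
end
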